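/- Let H be a graph with p vertices and q edges. If G is a graph with average degree at least 88(p + q), then G contains a subdivision of H. -/

import Mathlib

open scoped BigOperators

/-- The average degree of a graph `G`: `(1/|G|) * sum of degrees`. -/
noncomputable def avgDeg {V : Type*} (G : SimpleGraph V) : Real :=
  (finsum fun v : V => ((G.neighborSet v).ncard : Real)) / (Nat.card V : Real)

/-- `(b, P)` is a subdivision of `H` inside `G`: `b` gives the branch vertices and, for
each edge of `H`, `P` gives a path of `G` between the corresponding branch vertices; the
paths are pairwise internally vertex disjoint and no branch vertex is internal to a path. -/
def IsSubdivOn {V W : Type*} (G : SimpleGraph V) (H : SimpleGraph W)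
    (b : W → V) (P : ∀ ⦃i j : W⦄, H.Adj i j → G.Walk (b i) (b j)) : Prop :=
  Function.Injective b ∧
  (∀ i j (h : H.Adj i j), (P h).IsPath) ∧
  (∀ i j (h : H.Adj i j), P h.symm = (P h).reverse) ∧
  (∀ i j (h : H.Adj i j) (k : W), b k ∈ (P h).support → k = i ∨ k = j) ∧
  (∀ i j (hij : H.Adj i j), ∀ k l (hkl : H.Adj k l), s(i, j) ≠ s(k, l) →
    ∀ v : V, v ∈ (P hij).support → v ∈ (P hkl).support →
      (v = b i ∨ v = b j) ∧ (v = b k ∨ v = b l))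

/-- `G` contains a subdivision of `H`. -/
def HasSubdiv {V W : Type*} (G : SimpleGraph V) (H : SimpleGraph W) : Prop :=
  ∃ (b : W → V) (P : ∀ ⦃i j : W⦄, H.Adj i j → G.Walk (b i) (b j)), IsSubdivOn G H b P

/-!
A minimal subset `U` of the vertices of `G` that contains many edges relative to its size induces a
subgraph of large minimum degree without small separations. Such a subgraph is linked: any labelling
of a set `X` of few vertices extends to a labelling of `U` in which the vertices of `X` with a
common label are connected within that label. Subdivisions follow. Choose the branch vertices in
`U`, give each of them a private neighbour for every edge of `H` at it, and label that neighbour by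
the edge and the branch vertex by itself.

Linkedness is proved for the massed pairs of Thomas and Wollan, by induction on the numbers of
vertices and edges. A dense set that can be linked behind a small cut is replaced by a clique on the
cut, and a vertex of low degree or an edge that is not needed is deleted. If contracting an edge
destroys the hypotheses, then its ends have many common neighbours, or it lies on a cut of order
`#X` with a dense set behind it. If neither reduction applies, some vertex has a small closed
neighbourhood of large minimum degree. This contains a robust set, in which vertices can be linked
one pair after another along short paths, and Menger's theorem links `X` to it.
-/

namespace GraphLinkage

open Finset

variable {V W L : Type*} {G G' : SimpleGraph V}

/-! ### Counting edges -/

section Counting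

variable {S S' T T' : Finset V} {v w : V}

open Classical in
/-- The set of neighbours of `v` that lie in `S`. -/
noncomputable def nbrsIn (G : SimpleGraph V) (S : Finset V) (v : V) : Finset V :=
  {w ∈ S | G.Adj v w}

/-- The number of darts of `G[S]`, that is, twice its number of edges. -/
noncomputable def dartCount (G : SimpleGraph V) (S : Finset V) : ℕ :=
  ∑ v ∈ S, #(nbrsIn G S v)

/-- For disjoint `S` and `T`, twice the number of edges of `G[S ∪ T]` that meet `T`. -/
noncomputable def outerCount (G : SimpleGraph V) (S T : Finset V) : ℕ :=
  dartCount G T + 2 * ∑ t ∈ T, #(nbrsIn G S t)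

@[simp]
theorem mem_nbrsIn : w ∈ nbrsIn G S v ↔ w ∈ S ∧ G.Adj v w := by
  simp [nbrsIn]

theorem nbrsIn_subset : nbrsIn G S v ⊆ S := fun _ hw => (mem_nbrsIn.1 hw).1

theorem card_nbrsIn_mono (hS : S ⊆ S') (hG : ∀ w ∈ S, G.Adj v w → G'.Adj v w) :
    #(nbrsIn G S v) ≤ #(nbrsIn G' S' v) :=
  card_le_card fun w hw => by grind [mem_nbrsIn]

theorem nbrsIn_subset_erase [DecidableEq V] : nbrsIn G S v ⊆ S.erase v := by
  intro w hw
  have := (mem_nbrsIn.1 hw).2.ne'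
  grind [mem_nbrsIn]

theorem sum_card_nbrsIn_comm (G : SimpleGraph V) (S T : Finset V) :
    ∑ s ∈ S, #(nbrsIn G T s) = ∑ t ∈ T, #(nbrsIn G S t) := by
  classical
  have h := sum_card_bipartiteAbove_eq_sum_card_bipartiteBelow (s := S) (t := T) G.Adj
  simpa only [bipartiteAbove, bipartiteBelow, nbrsIn, G.adj_comm] using h

theorem dartCount_mono_graph (hG : ∀ v ∈ S, ∀ w ∈ S, G.Adj v w → G'.Adj v w) :
    dartCount G S ≤ dartCount G' S :=
  sum_le_sum fun v hv => card_nbrsIn_mono Subset.rfl (hG v hv)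

theorem dartCount_le_card_mul_card : dartCount G S ≤ #S * #S :=
  (sum_le_card_nsmul S _ #S fun _ _ => card_le_card nbrsIn_subset).trans_eq (smul_eq_mul _ _)

theorem dartCount_deleteEdges_lt (hv : v ∈ S) (hw : w ∈ S) (h : G.Adj v w) :
    dartCount (G.deleteEdges {s(v, w)}) S < dartCount G S := by
  have hle : G.deleteEdges {s(v, w)} ≤ G := SimpleGraph.deleteEdges_le _
  refine sum_lt_sum (fun a _ => card_nbrsIn_mono Subset.rfl fun b _ hb => hle hb)
    ⟨v, hv, card_lt_card (Finset.ssubset_iff_subset_ne.2 ⟨fun b hb => ?_, fun heq => ?_⟩)⟩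
  · exact mem_nbrsIn.2 ⟨(mem_nbrsIn.1 hb).1, hle (mem_nbrsIn.1 hb).2⟩
  · have : w ∈ nbrsIn (G.deleteEdges {s(v, w)}) S v := heq ▸ mem_nbrsIn.2 ⟨hw, h⟩
    simp at this

theorem outerCount_mono (hT : ∀ v ∈ T, ∀ w ∈ T, G.Adj v w → G'.Adj v w)
    (hS : ∀ t ∈ T, #(nbrsIn G S t) ≤ #(nbrsIn G' S' t)) :
    outerCount G S T ≤ outerCount G' S' T :=
  Nat.add_le_add (dartCount_mono_graph hT) (Nat.mul_le_mul_left 2 (sum_le_sum hS))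

theorem outerCount_singleton : outerCount G S {v} = 2 * #(nbrsIn G S v) := by
  simp [outerCount, dartCount, nbrsIn, filter_singleton]

variable [DecidableEq V]

theorem card_nbrsIn_union (G : SimpleGraph V) (h : Disjoint S T) (v : V) :
    #(nbrsIn G (S ∪ T) v) = #(nbrsIn G S v) + #(nbrsIn G T v) := by
  rw [← card_union_of_disjoint (h.mono nbrsIn_subset nbrsIn_subset)]
  congr 1
  grind [mem_nbrsIn]

theorem dartCount_union (G : SimpleGraph V) (h : Disjoint S T) :
    dartCount G (S ∪ T) = dartCount G S + outerCount G S T := by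
  simp only [dartCount, outerCount, sum_union h, card_nbrsIn_union G h, sum_add_distrib,
    sum_card_nbrsIn_comm G S T]
  ring

theorem dartCount_eq_add_outerCount (G : SimpleGraph V) (h : S ⊆ T) :
    dartCount G T = dartCount G S + outerCount G S (T \ S) := by
  rw [← dartCount_union G disjoint_sdiff, union_sdiff_of_subset h]

omit [DecidableEq V] in
theorem dartCount_mono (h : S ⊆ T) : dartCount G S ≤ dartCount G T := by
  classical
  rw [dartCount_eq_add_outerCount G h]
  exact Nat.le_add_right _ _

theorem outerCount_union (hST : Disjoint S T) (hST' : Disjoint S T') (hTT' : Disjoint T T') :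
    outerCount G S (T ∪ T') = outerCount G S T + outerCount G (S ∪ T) T' := by
  have h₁ := dartCount_union G hST
  have h₂ := dartCount_union G (disjoint_union_left.2 ⟨hST', hTT'⟩)
  have h₃ := dartCount_union G (disjoint_union_right.2 ⟨hST, hST'⟩)
  rw [union_assoc] at h₂
  omega

theorem dartCount_insert (h : v ∉ S) :
    dartCount G (insert v S) = dartCount G S + 2 * #(nbrsIn G S v) := by
  rw [insert_eq, union_comm, dartCount_union G (disjoint_singleton_right.2 h),
    outerCount_singleton]

theorem nbrsIn_erase_self : nbrsIn G (S.erase v) v = nbrsIn G S v := by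
  have := G.irrefl (v := v)
  grind [mem_nbrsIn]

theorem outerCount_sdiff_eq_add (hX : S ⊆ T) (hv : v ∈ T) (hvS : v ∉ S) :
    outerCount G S (T \ S) = outerCount G S (T.erase v \ S) + 2 * #(nbrsIn G T v) := by
  have h_insert := dartCount_insert (G := G) (notMem_erase v T)
  rw [insert_erase hv, nbrsIn_erase_self, dartCount_eq_add_outerCount G hX,
    dartCount_eq_add_outerCount G (subset_erase.2 ⟨hX, hvS⟩)] at h_insert
  omega

omit [DecidableEq V] in
theorem dartCount_le_deleteEdges_add_two (hv : v ∈ S) :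
    dartCount G S ≤ dartCount (G.deleteEdges {s(v, w)}) S + 2 := by
  classical
  have h_del : ∀ a b, a ≠ w ∨ b ≠ v → a ≠ v ∨ b ≠ w → G.Adj a b →
      (G.deleteEdges {s(v, w)}).Adj a b := fun a b h h' hab => by
    rw [SimpleGraph.deleteEdges_adj, Set.mem_singleton_iff, Sym2.eq_iff]
    exact ⟨hab, by tauto⟩
  have h_erase : dartCount G (S.erase v) ≤ dartCount (G.deleteEdges {s(v, w)}) (S.erase v) :=
    dartCount_mono_graph fun a ha b hb =>
      h_del a b (.inr (ne_of_mem_erase hb)) (.inl (ne_of_mem_erase ha))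
  have h_nbrs : #(nbrsIn G (S.erase v) v) ≤
      #(nbrsIn (G.deleteEdges {s(v, w)}) (S.erase v) v) + 1 := by
    refine (card_le_card fun b hb => ?_).trans (card_insert_le w _)
    obtain ⟨hbS, hvb⟩ := mem_nbrsIn.1 hb
    rw [mem_insert, mem_nbrsIn, or_iff_not_imp_left]
    exact fun hbw => ⟨hbS, h_del v b (.inr hvb.ne') (.inr hbw) hvb⟩
  have h_split := dartCount_insert (G := G) (notMem_erase v S)
  have h_split' := dartCount_insert (G := G.deleteEdges {s(v, w)}) (notMem_erase v S)
  rw [insert_erase hv] at h_split h_split'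
  omega

omit [DecidableEq V] in
theorem dartCount_lt_of_adj (h : S ⊆ T) (hv : v ∈ S) (hw : w ∈ T) (hwS : w ∉ S)
    (hvw : G.Adj v w) : dartCount G S < dartCount G T := by
  classical
  have h_nonempty : 0 < #(nbrsIn G S w) := card_pos.2 ⟨v, mem_nbrsIn.2 ⟨hv, hvw.symm⟩⟩
  have h_insert := dartCount_insert (G := G) hwS
  have h_mono : dartCount G (insert w S) ≤ dartCount G T :=
    dartCount_mono (insert_subset hw h)
  omega

end Counting

/-! ### Separations -/

section Separations

variable [DecidableEq V] {U X Z A B A' B' : Finset V} {a b v : V}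

/-- `(A, B)` is a separation of `G[U]`: every edge lies in `A` or in `B`. Its order is
`#(A ∩ B)`. -/
structure IsSeparation (G : SimpleGraph V) (U A B : Finset V) : Prop where
  union_eq : A ∪ B = U
  not_adj : ∀ a ∈ A, a ∉ B → ∀ b ∈ B, b ∉ A → ¬ G.Adj a b

/-- No separation of `G[U]` of order less than `n` separates `X` from `Z`. -/
def IsConnectedBetween (n : ℕ) (G : SimpleGraph V) (U X Z : Finset V) : Prop :=
  ∀ A B, IsSeparation G U A B → X ⊆ A → Z ⊆ B → n ≤ #(A ∩ B)

namespace IsSeparation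

theorem left_subset (h : IsSeparation G U A B) : A ⊆ U := h.union_eq ▸ subset_union_left

theorem right_subset (h : IsSeparation G U A B) : B ⊆ U := h.union_eq ▸ subset_union_right

theorem symm (h : IsSeparation G U A B) : IsSeparation G U B A :=
  ⟨union_comm A B ▸ h.union_eq, fun b hb hbA a ha haB hba => h.not_adj a ha haB b hb hbA hba.symm⟩

theorem anti (h : IsSeparation G' U A B) (hG : G ≤ G') : IsSeparation G U A B :=
  ⟨h.union_eq, fun a ha haB b hb hbA hab => h.not_adj a ha haB b hb hbA (hG hab)⟩

theorem of_subset (h : A ⊆ U) : IsSeparation G U A U :=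
  ⟨union_eq_right.2 h, fun _ ha haU => (haU (h ha)).elim⟩

theorem card_add_card (h : IsSeparation G U A B) : #A + #B = #U + #(A ∩ B) := by
  rw [← h.union_eq, card_union_add_card_inter]

theorem nbrsIn_subset_left (h : IsSeparation G U A B) (ha : a ∈ A) (haB : a ∉ B) :
    nbrsIn G U a ⊆ A := fun b hb => by
  obtain ⟨hbU, hab⟩ := mem_nbrsIn.1 hb
  by_contra hbA
  have hbB : b ∈ B := (mem_union.1 (h.union_eq ▸ hbU)).resolve_left hbA
  exact h.not_adj a ha haB b hbB hbA hab

theorem outerCount_left_eq (h : IsSeparation G U A B) :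
    outerCount G A (B \ A) = outerCount G (A ∩ B) (B \ A) := by
  have h_nbrs : ∀ b ∈ B \ A, nbrsIn G A b = nbrsIn G (A ∩ B) b := fun b hb => by
    ext a
    have h_not_adj := h.symm.not_adj b (mem_sdiff.1 hb).1 (mem_sdiff.1 hb).2 a
    grind [mem_nbrsIn]
  rw [outerCount, sum_congr rfl fun b hb => congrArg card (h_nbrs b hb), outerCount]

theorem dartCount_add (h : IsSeparation G U A B) :
    dartCount G A + dartCount G B = dartCount G U + dartCount G (A ∩ B) := by
  have hU := dartCount_eq_add_outerCount G h.left_subset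
  have hB := dartCount_eq_add_outerCount G (inter_subset_right : A ∩ B ⊆ B)
  rw [← h.union_eq, union_sdiff_left, h.outerCount_left_eq, h.union_eq] at hU
  rw [sdiff_inter_self_right] at hB
  omega

theorem union_left (h : IsSeparation G U A B) (h' : IsSeparation G B A' B') :
    IsSeparation G U (A ∪ A') B' := by
  have h_union := h.union_eq
  have h_union' := h'.union_eq
  refine ⟨by grind, fun a ha haB' b hb hbA hab => ?_⟩
  by_cases haA : a ∈ A'
  · exact h'.not_adj a haA haB' b hb (by grind) hab
  · exact h.not_adj a (by grind) (by grind) b (by grind) (by grind) hab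

theorem union_inter_eq (h' : IsSeparation G B A' B') (hA' : A ∩ B ⊆ A') :
    (A ∪ A') ∩ B' = A' ∩ B' := by
  rw [union_inter_distrib_right, union_eq_right, subset_inter_iff]
  exact ⟨(inter_subset_inter_left h'.right_subset).trans hA', inter_subset_right⟩

theorem insert_insert (h : IsSeparation G (U.erase v) A B) (hv : v ∈ U) :
    IsSeparation G U (insert v A) (insert v B) := by
  refine ⟨?_, fun a ha haB b hb hbA => h.not_adj a ?_ ?_ b ?_ ?_⟩
  · rw [← insert_erase hv, ← h.union_eq, insert_union_distrib]
  all_goals grind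

theorem insert_of_deleteEdges (h : IsSeparation (G.deleteEdges {s(a, b)}) U A B) (ha : a ∈ A) :
    IsSeparation G U A (insert a B) := by
  have haU := h.left_subset ha
  refine ⟨by rw [union_insert, h.union_eq, insert_eq_of_mem haU], ?_⟩
  intro c hc hcB d hd hdA hcd
  have hda : d ≠ a := by grind
  have hca : c ≠ a := by grind
  exact h.not_adj c hc (by grind) d (by grind) hdA
    (SimpleGraph.deleteEdges_adj.2 ⟨hcd, by simp [hca, hda]⟩)

end IsSeparation

theorem exists_crossing_of_deleteEdges (h : IsSeparation (G.deleteEdges {s(a, b)}) U A B)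
    (h_not : ¬ IsSeparation G U A B) :
    ∃ c ∈ A \ B, ∃ d ∈ B \ A, G.Adj c d ∧ s(c, d) = s(a, b) := by
  contrapose! h_not
  refine ⟨h.union_eq, fun c hc hcB d hd hdA hcd => h.not_adj c hc hcB d hd hdA ?_⟩
  exact SimpleGraph.deleteEdges_adj.2
    ⟨hcd, h_not c (mem_sdiff.2 ⟨hc, hcB⟩) d (mem_sdiff.2 ⟨hd, hdA⟩) hcd⟩

namespace IsConnectedBetween

variable {n : ℕ}

theorem symm (h : IsConnectedBetween n G U X Z) : IsConnectedBetween n G U Z X :=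
  fun A B hAB hZ hX => inter_comm A B ▸ h B A hAB.symm hX hZ

theorem right_side (h : IsConnectedBetween n G U X Z) (hAB : IsSeparation G U A B)
    (hX : X ⊆ A) (hA : A ∩ B ⊆ A') : IsConnectedBetween n G B A' Z := fun A₁ B₁ h₁ hA₁ hZ => by
  rw [← h₁.union_inter_eq (hA.trans hA₁)]
  exact h _ _ (hAB.union_left h₁) (hX.trans subset_union_left) hZ

end IsConnectedBetween

theorem exists_minimum_separation (hX : X ⊆ U) (hZ : Z ⊆ U) :
    ∃ A B, IsSeparation G U A B ∧ X ⊆ A ∧ Z ⊆ B ∧ IsConnectedBetween #(A ∩ B) G U X Z := by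
  let P : Finset V × Finset V → Prop := fun D => IsSeparation G U D.1 D.2 ∧ X ⊆ D.1 ∧ Z ⊆ D.2
  obtain ⟨D, ⟨hD, hXD, hZD⟩, hmin⟩ := exists_minimalFor_of_wellFoundedLT P
    (fun D => #(D.1 ∩ D.2)) ⟨(X, U), .of_subset hX, Subset.rfl, hZ⟩
  exact ⟨D.1, D.2, hD, hXD, hZD, fun A B hAB hXA hZB =>
    le_of_not_gt fun hlt => hlt.not_ge (hmin (j := (A, B)) ⟨hAB, hXA, hZB⟩ hlt.le)⟩

end Separations

/-! ### Linkages and Menger's theorem -/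

section Linkages

variable {U U' X Y Z : Finset V} {L' : Type*} {f : V → L} {f' : V → L'} {x y z : V}

/-- The subgraph of `G[U]` of the edges whose ends have the same label. Vertices with distinct
labels lie in distinct components, so a labelling encodes disjoint connected subgraphs. -/
def monoGraph (G : SimpleGraph V) (U : Finset V) (f : V → L) : SimpleGraph V where
  Adj v w := G.Adj v w ∧ v ∈ U ∧ w ∈ U ∧ f v = f w
  symm.symm _ _ h := ⟨h.1.symm, h.2.2.1, h.2.1, h.2.2.2.symm⟩
  loopless.irrefl _ h := h.1.ne rfl

/-- Every labelling of `X` extends to `G[U]` in such a way that the vertices of `X` with a common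
label are joined within that label. -/
def Linked (L : Type*) (G : SimpleGraph V) (U X : Finset V) : Prop :=
  ∀ l : V → L, ∃ f : V → L, (∀ x ∈ X, f x = l x) ∧
    ∀ x ∈ X, ∀ y ∈ X, l x = l y → (monoGraph G U f).Reachable x y

/-- There are pairwise disjoint paths of `G[U]` from the vertices of `X` to `Z`. The path from `x`
is labelled by `x`. -/
def Link (G : SimpleGraph V) (U X Z : Finset V) : Prop :=
  ∃ f : V → V, (∀ x ∈ X, f x = x) ∧ ∀ x ∈ X, ∃ z ∈ Z, (monoGraph G U f).Reachable x z

theorem reachable_of_forall_adj (h : G.Reachable x y)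
    (hG : ∀ v w, G.Reachable x v → G.Adj v w → G'.Reachable v w) : G'.Reachable x y := by
  rw [SimpleGraph.reachable_iff_reflTransGen] at h
  induction h with
  | refl => exact .rfl
  | tail hv hvw ih =>
    exact ih.trans (hG _ _ ((SimpleGraph.reachable_iff_reflTransGen _ _).2 hv) hvw)

theorem monoGraph_le_monoGraph (hG : ∀ v ∈ U, ∀ w ∈ U, G.Adj v w → G'.Adj v w) (hU : U ⊆ U')
    (hf : ∀ v ∈ U, ∀ w ∈ U, f v = f w → f' v = f' w) : monoGraph G U f ≤ monoGraph G' U' f' :=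
  fun v w ⟨hvw, hv, hw, hfvw⟩ => ⟨hG v hv w hw hvw, hU hv, hU hw, hf v hv w hw hfvw⟩

theorem label_eq_of_reachable (h : (monoGraph G U f).Reachable x y) : f x = f y := by
  rw [SimpleGraph.reachable_iff_reflTransGen] at h
  induction h with
  | refl => rfl
  | tail _ hvw ih => exact ih.trans hvw.2.2.2

theorem Linked.mono (h : Linked L G U X) (hG : ∀ v ∈ U, ∀ w ∈ U, G.Adj v w → G'.Adj v w)
    (hU : U ⊆ U') : Linked L G' U' X := fun l => by
  obtain ⟨f, hfl, hf⟩ := h l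
  exact ⟨f, hfl, fun x hx y hy hxy =>
    (hf x hx y hy hxy).mono (monoGraph_le_monoGraph hG hU fun _ _ _ _ => id)⟩

theorem Linked.subset (h : Linked L G U X) (hY : Y ⊆ X) : Linked L G U Y := fun l => by
  obtain ⟨f, hfl, hf⟩ := h l
  exact ⟨f, fun x hx => hfl x (hY hx), fun x hx y hy => hf x (hY hx) y (hY hy)⟩

theorem Link.mono_graph (h : Link G U X Z) (hG : G ≤ G') : Link G' U X Z := by
  obtain ⟨f, hfX, hf⟩ := h
  refine ⟨f, hfX, fun x hx => (hf x hx).imp fun z hz => ⟨hz.1, hz.2.mono ?_⟩⟩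
  exact monoGraph_le_monoGraph (fun _ _ _ _ h => hG h) Subset.rfl fun _ _ _ _ => id

theorem Link.refl_of_subset (h : X ⊆ Z) : Link G U X Z :=
  ⟨id, fun _ _ => rfl, fun x hx => ⟨x, h hx, .rfl⟩⟩

variable [DecidableEq V] {A B : Finset V} {a b : V}

theorem exists_reachable_first_entry (h : (monoGraph G U f).Reachable x z) (hz : z ∈ Z) :
    ∃ z' ∈ Z, (monoGraph G (insert z' (U \ Z)) f).Reachable x z' := by
  rw [SimpleGraph.reachable_iff_reflTransGen] at h
  induction h using Relation.ReflTransGen.head_induction_on with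
  | refl => exact ⟨z, hz, .rfl⟩
  | @head v w hvw _ ih =>
    obtain ⟨hadj, hv, hw, hf⟩ := hvw
    by_cases hvZ : v ∈ Z
    · exact ⟨v, hvZ, .rfl⟩
    have h_edge : ∀ z', w ∈ insert z' (U \ Z) →
        (monoGraph G (insert z' (U \ Z)) f).Reachable v w := fun z' hwz' =>
      SimpleGraph.Adj.reachable (G := monoGraph G _ f) ⟨hadj, by grind, hwz', hf⟩
    by_cases hwZ : w ∈ Z
    · exact ⟨w, hwZ, h_edge w (by simp)⟩
    obtain ⟨z', hz', hr⟩ := ih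
    exact ⟨z', hz', (h_edge z' (by grind)).trans hr⟩

theorem Link.linked (hA : Link G A X (A ∩ B))
    (hB : ∀ Y ⊆ A ∩ B, #Y ≤ #X → Linked L G B Y) : Linked L G (A ∪ B) X := fun l => by
  obtain ⟨f₁, hf₁X, hf₁⟩ := hA
  have h_entry : ∀ x ∈ X, ∃ z ∈ A ∩ B, (monoGraph G (insert z (A \ (A ∩ B))) f₁).Reachable x z :=
    fun x hx => (hf₁ x hx).elim fun _ hz => exists_reachable_first_entry hz.2 hz.1
  choose! z hz hxz using h_entry
  have hf₁z : ∀ x ∈ X, f₁ (z x) = x := fun x hx =>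
    (label_eq_of_reachable (hxz x hx)).symm.trans (hf₁X x hx)
  obtain ⟨f₂, hf₂z, hf₂⟩ := hB (X.image z) (image_subset_iff.2 hz) card_image_le (l ∘ f₁)
  set f : V → L := fun v => if v ∈ B then f₂ v else l (f₁ v)
  have hfB : ∀ v ∈ B, f v = f₂ v := fun v hv => if_pos hv
  have hfA : ∀ x ∈ X, ∀ v ∈ insert (z x) (A \ (A ∩ B)), f v = l (f₁ v) := by
    intro x hx v hv
    by_cases hvB : v ∈ B
    · obtain rfl : v = z x := by grind
      rw [hfB _ hvB, hf₂z _ (mem_image_of_mem z hx), Function.comp_apply]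
    · exact if_neg hvB
  have h_reach : ∀ x ∈ X, (monoGraph G (A ∪ B) f).Reachable x (z x) := fun x hx =>
    (hxz x hx).mono (monoGraph_le_monoGraph (fun _ _ _ _ => id) (by grind)
      fun v hv w hw hvw => by rw [hfA x hx v hv, hfA x hx w hw, hvw])
  refine ⟨f, fun x hx => ?_, fun x hx y hy hxy =>
    (h_reach x hx).trans (.trans ?_ (h_reach y hy).symm)⟩
  · rw [label_eq_of_reachable (h_reach x hx), hfA x hx _ (mem_insert_self _ _), hf₁z x hx]
  · have h_label : (l ∘ f₁) (z x) = (l ∘ f₁) (z y) := by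
      simp only [Function.comp_apply, hf₁z x hx, hf₁z y hy, hxy]
    refine (hf₂ _ (mem_image_of_mem z hx) _ (mem_image_of_mem z hy) h_label).mono
      (monoGraph_le_monoGraph (fun _ _ _ _ => id) subset_union_right fun v hv w hw hvw => ?_)
    rw [hfB v hv, hfB w hw, hvw]

/-- Gluing at a cut `A ∩ B` and one further edge `ab`: a vertex of `B` whose path in `B` starts at
`b` is relabelled by the start of the path in `A` that ends at `a`. -/
theorem Link.glue (hA : Link G A X (insert a (A ∩ B))) (hB : Link G B (insert b (A ∩ B)) Z)
    (hX : X ⊆ A) (ha : a ∈ A) (hb : b ∈ B) (hbA : b ∉ A) (hab : G.Adj a b) :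
    Link G (A ∪ B) X Z := by
  obtain ⟨f₁, hf₁X, hf₁⟩ := hA
  obtain ⟨f₂, hf₂S, hf₂⟩ := hB
  let g : V → V := fun s => if s = b then f₁ a else f₁ s
  let f : V → V := fun v => if v ∈ A then f₁ v else g (f₂ v)
  have hfA : ∀ v ∈ A, f v = f₁ v := fun v hv => if_pos hv
  have hfB : ∀ v ∈ B, f v = g (f₂ v) := fun v hv => by
    by_cases hvA : v ∈ A
    · have hv_fixed : f₂ v = v := hf₂S v (by grind)
      have hvb : v ≠ b := by grind
      simp only [f, g, hvA, hv_fixed, hvb, if_true, if_false]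
    · exact if_neg hvA
  have h_to_Z : ∀ s ∈ insert b (A ∩ B), ∃ z ∈ Z, (monoGraph G (A ∪ B) f).Reachable s z :=
    fun s hs => by
      obtain ⟨z, hz, hsz⟩ := hf₂ s hs
      exact ⟨z, hz, hsz.mono (monoGraph_le_monoGraph (fun _ _ _ _ => id) subset_union_right
        fun v hv w hw hvw => by rw [hfB v hv, hfB w hw, hvw])⟩
  refine ⟨f, fun x hx => (hfA x (hX hx)).trans (hf₁X x hx), fun x hx => ?_⟩
  obtain ⟨s, hs, hxs⟩ := hf₁ x hx
  replace hxs : (monoGraph G (A ∪ B) f).Reachable x s :=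
    hxs.mono (monoGraph_le_monoGraph (fun _ _ _ _ => id) subset_union_left
      fun v hv w hw hvw => by rw [hfA v hv, hfA w hw, hvw])
  rcases mem_insert.1 hs with rfl | hs
  · obtain ⟨z, hz, hbz⟩ := h_to_Z b (mem_insert_self _ _)
    have hfab : f s = f b := by
      rw [hfA s ha, hfB b hb, hf₂S b (mem_insert_self _ _)]
      exact (if_pos rfl).symm
    have h_edge : (monoGraph G (A ∪ B) f).Adj s b := ⟨hab, by grind, by grind, hfab⟩
    exact ⟨z, hz, hxs.trans (h_edge.reachable.trans hbz)⟩
  · obtain ⟨z, hz, hsz⟩ := h_to_Z s (mem_insert_of_mem hs)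
    exact ⟨z, hz, hxs.trans hsz⟩

theorem IsConnectedBetween.split_at_edge (h : IsConnectedBetween #X G U X Z)
    (hAB : IsSeparation (G.deleteEdges {s(a, b)}) U A B) (hX : X ⊆ A) (hZ : Z ⊆ B) (ha : a ∈ A)
    (hb : b ∈ B) (h_lt : #(A ∩ B) < #X) :
    IsConnectedBetween #X G A X (insert a (A ∩ B)) ∧
      IsConnectedBetween #(insert b (A ∩ B)) G B (insert b (A ∩ B)) Z := by
  have hA : IsSeparation G U (insert a B) A := (hAB.insert_of_deleteEdges ha).symm
  have hB : IsSeparation G U (insert b A) B :=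
    (IsSeparation.insert_of_deleteEdges (Sym2.eq_swap ▸ hAB.symm) hb).symm
  refine ⟨(h.symm.right_side hA (hZ.trans (subset_insert _ _)) (by grind)).symm, ?_⟩
  intro A₁ B₁ h₁ hA₁ hB₁
  exact ((card_insert_le _ _).trans h_lt).trans
    (h.right_side hB (hX.trans (subset_insert _ _)) (by grind) A₁ B₁ h₁ hA₁ hB₁)

/-- Deleting an edge either keeps the connectivity, or creates a separation of order `#X - 1`
crossed only by that edge; the paths on its two sides are then glued along the edge. -/
theorem menger (hX : X ⊆ U) (hZ : Z ⊆ U) (h : IsConnectedBetween #X G U X Z) : Link G U X Z := by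
  induction hn : dartCount G U using Nat.strong_induction_on generalizing G U X Z with
  | _ n ih =>
  subst hn
  by_cases h_edge : ∃ a ∈ U, ∃ b ∈ U, G.Adj a b
  · obtain ⟨a, ha, b, hb, hab⟩ := h_edge
    by_cases h_del : IsConnectedBetween #X (G.deleteEdges {s(a, b)}) U X Z
    · exact (ih _ (dartCount_deleteEdges_lt ha hb hab) hX hZ h_del rfl).mono_graph
        (SimpleGraph.deleteEdges_le _)
    simp only [IsConnectedBetween, not_forall, not_le] at h_del
    obtain ⟨A, B, hAB, hXA, hZB, h_lt⟩ := h_del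
    obtain ⟨c, hc, d, hd, hcd, h_eq⟩ := exists_crossing_of_deleteEdges hAB
      fun h_sep => (h A B h_sep hXA hZB).not_gt h_lt
    obtain ⟨⟨hcA, hcB⟩, hdB, hdA⟩ := And.intro (mem_sdiff.1 hc) (mem_sdiff.1 hd)
    obtain ⟨h_left, h_right⟩ := h.split_at_edge (h_eq ▸ hAB) hXA hZB hcA hdB h_lt
    have hA_lt := dartCount_lt_of_adj hAB.left_subset hcA (hAB.right_subset hdB) hdA hcd
    have hB_lt := dartCount_lt_of_adj hAB.right_subset hdB (hAB.left_subset hcA) hcB hcd.symm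
    have h_link := (ih _ hA_lt hXA (insert_subset hcA inter_subset_left) h_left rfl).glue
      (ih _ hB_lt (insert_subset hdB inter_subset_right) hZB h_right rfl) hXA hcA hdB hdA hcd
    exact hAB.union_eq ▸ h_link
  · have h_sep : IsSeparation G U X ((U \ X) ∪ Z) :=
      ⟨by grind, fun a ha _ b hb _ hab => h_edge ⟨a, hX ha, b, by grind, hab⟩⟩
    have h_card : #X ≤ #(X ∩ Z) := by
      have h_eq : X ∩ ((U \ X) ∪ Z) = X ∩ Z := by grind
      exact h_eq ▸ h _ _ h_sep Subset.rfl subset_union_right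
    exact .refl_of_subset (inter_eq_left.1 (eq_of_subset_of_card_le inter_subset_left h_card))

end Linkages

/-! ### Robust sets -/

section Robust

variable {K J C D X : Finset V} {n i j d : ℕ} {f : V → L} {x y z : V}

/-- There is a walk of length at most `n` from `x` to `y` all of whose other vertices lie
in `K`. -/
def JoinedVia (G : SimpleGraph V) (K : Finset V) (n : ℕ) (x y : V) : Prop :=
  ∃ p : G.Walk x y, p.length ≤ n ∧ ∀ v ∈ p.support, v = x ∨ v = y ∨ v ∈ K

namespace JoinedVia

theorem of_adj (h : G.Adj x y) : JoinedVia G K 1 x y :=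
  ⟨h.toWalk, by simp, by simp⟩

theorem symm (h : JoinedVia G K n x y) : JoinedVia G K n y x := by
  obtain ⟨p, hp, hpK⟩ := h
  refine ⟨p.reverse, by simpa using hp, fun v hv => ?_⟩
  have := hpK v (by simpa using hv)
  tauto

theorem mono (h : JoinedVia G K i x y) (hij : i ≤ j) : JoinedVia G K j x y :=
  h.imp fun _ hp => ⟨hp.1.trans hij, hp.2⟩

theorem trans (h : JoinedVia G K i x y) (hy : y ∈ K) (h' : JoinedVia G K j y z) :
    JoinedVia G K (i + j) x z := by
  obtain ⟨p, hp, hpK⟩ := h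
  obtain ⟨q, hq, hqK⟩ := h'
  refine ⟨p.append q, by rw [SimpleGraph.Walk.length_append]; omega, fun v hv => ?_⟩
  rcases (SimpleGraph.Walk.mem_support_append_iff p q).1 hv with hv | hv
  · rcases hpK v hv with rfl | rfl | hv <;> tauto
  · rcases hqK v hv with rfl | rfl | hv <;> tauto

end JoinedVia

theorem reachable_of_walk_of_constant (p : G.Walk x y) {U : Finset V} {c : L}
    (hp : ∀ v ∈ p.support, v ∈ U ∧ f v = c) : (monoGraph G U f).Reachable x y := by
  induction p with
  | nil => exact .rfl
  | @cons u v w h p ih =>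
    obtain ⟨huU, huc⟩ := hp u (by simp)
    obtain ⟨hvU, hvc⟩ := hp v (by simp)
    have h_adj : (monoGraph G U f).Adj u v := ⟨h, huU, hvU, huc.trans hvc.symm⟩
    exact h_adj.reachable.trans (ih fun a ha => hp a (by simp [ha]))

variable [DecidableEq V]

/-- Any two vertices of `D` can be joined by a short path inside `D` that avoids up to `n`
prescribed vertices of `D`. -/
def IsRobust (n : ℕ) (G : SimpleGraph V) (D : Finset V) : Prop :=
  ∀ J ⊆ D, #J ≤ n → ∀ x ∈ J, ∀ y ∈ J, JoinedVia G (D \ J) 5 x y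

theorem IsRobust.exists_extension (h : IsRobust n G D) (hJ : J ⊆ D) (hJn : #J ≤ n) (hx : x ∈ J)
    (hy : y ∈ J) (hxy : f x = f y) :
    ∃ (f' : V → L) (J' : Finset V), J ⊆ J' ∧ J' ⊆ D ∧ #J' ≤ #J + 4 ∧ (∀ v ∈ J, f' v = f v) ∧
      (monoGraph G J' f').Reachable x y := by
  rcases eq_or_ne x y with rfl | hne
  · exact ⟨f, J, Subset.rfl, hJ, Nat.le_add_right _ _, fun _ _ => rfl, .rfl⟩
  obtain ⟨p, hp, hpK⟩ := h J hJ hJn x hx y hy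
  set Q := p.support.toFinset with hQ
  have hQ_card : #Q ≤ 6 :=
    (List.toFinset_card_le _).trans (by rw [SimpleGraph.Walk.length_support]; omega)
  have hxy_sub : ({x, y} : Finset V) ⊆ J ∩ Q := by
    simp [insert_subset_iff, hx, hy, hQ]
  have hJQ_card : 2 ≤ #(J ∩ Q) := card_pair hne ▸ card_le_card hxy_sub
  refine ⟨fun v => if v ∈ J then f v else f x, J ∪ Q, subset_union_left, ?_, ?_,
    fun v hv => if_pos hv, reachable_of_walk_of_constant (c := f x) p fun v hv => ⟨?_, ?_⟩⟩
  · refine union_subset hJ fun v hv => ?_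
    have := hpK v (List.mem_toFinset.1 hv)
    grind
  · have := card_union_add_card_inter J Q
    omega
  · exact mem_union_right _ (List.mem_toFinset.2 hv)
  · have := hpK v hv
    grind

theorem IsRobust.exists_joining (h : IsRobust n G D) {P : Finset V} (hX : X ⊆ D)
    (hn : 5 * #X ≤ n) (hP : P ⊆ X) (l : V → L) :
    ∃ (f : V → L) (J : Finset V), X ⊆ J ∧ J ⊆ D ∧ #J ≤ #X + 4 * #P ∧ (∀ x ∈ X, f x = l x) ∧
      ∀ x ∈ P, ∀ y ∈ P, l x = l y → (monoGraph G J f).Reachable x y := by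
  induction P using Finset.induction_on with
  | empty => exact ⟨l, X, Subset.rfl, hX, by simp, fun _ _ => rfl, by simp⟩
  | insert z P hz ih =>
    obtain ⟨hzX, hPX⟩ := insert_subset_iff.1 hP
    obtain ⟨f, J, hXJ, hJD, hJ, hfl, hf⟩ := ih hPX
    rw [card_insert_of_notMem hz]
    by_cases h_new : ∀ y ∈ P, l y ≠ l z
    · refine ⟨f, J, hXJ, hJD, by omega, hfl, fun a ha b hb hab => ?_⟩
      rcases mem_insert.1 ha with rfl | haP <;> rcases mem_insert.1 hb with rfl | hbP
      · exact .rfl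
      · exact (h_new b hbP hab.symm).elim
      · exact (h_new a haP hab).elim
      · exact hf a haP b hbP hab
    push Not at h_new
    obtain ⟨y, hy, hyz⟩ := h_new
    have hP_card : #P ≤ #X := card_le_card hPX
    have hfzy : f z = f y := by rw [hfl z hzX, hfl y (hPX hy), hyz]
    obtain ⟨f', J', hJJ', hJ'D, hJ', hf'f, hzy⟩ :=
      h.exists_extension hJD (by omega) (hXJ hzX) (hXJ (hPX hy)) hfzy
    have hf' : ∀ a ∈ P, ∀ b ∈ P, l a = l b → (monoGraph G J' f').Reachable a b :=
      fun a ha b hb hab => (hf a ha b hb hab).mono (monoGraph_le_monoGraph (fun _ _ _ _ => id) hJJ'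
        fun v hv w hw hvw => by rw [hf'f v hv, hf'f w hw, hvw])
    have h_from_z : ∀ a ∈ P, l a = l z → (monoGraph G J' f').Reachable z a :=
      fun a ha haz => hzy.trans (hf' y hy a ha (hyz.trans haz.symm))
    refine ⟨f', J', hXJ.trans hJJ', hJ'D, by omega,
      fun v hv => (hf'f v (hXJ hv)).trans (hfl v hv), fun a ha b hb hab => ?_⟩
    rcases mem_insert.1 ha with rfl | haP <;> rcases mem_insert.1 hb with rfl | hbP
    · exact .rfl
    · exact h_from_z b hbP hab.symm
    · exact (h_from_z a haP hab).symm
    · exact hf' a haP b hbP hab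

theorem IsRobust.linked (h : IsRobust n G D) (hX : X ⊆ D) (hn : 5 * #X ≤ n) :
    Linked L G D X := fun l => by
  obtain ⟨f, J, -, hJD, -, hfl, hf⟩ := h.exists_joining hX hn Subset.rfl l
  exact ⟨f, hfl, fun x hx y hy hxy => (hf x hx y hy hxy).mono
    (monoGraph_le_monoGraph (fun _ _ _ _ => id) hJD fun _ _ _ _ => id)⟩

theorem isRobust_of_card_add_lt (h : ∀ x ∈ C, #C + n < 2 * #(nbrsIn G C x)) :
    IsRobust n G C := fun J hJ hJn x hx y hy => by
  have hx_nbrs := h x (hJ hx)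
  have hy_nbrs := h y (hJ hy)
  have h_union : #(nbrsIn G C x ∪ nbrsIn G C y) ≤ #C :=
    card_le_card (union_subset nbrsIn_subset nbrsIn_subset)
  have h_card := card_union_add_card_inter (nbrsIn G C x) (nbrsIn G C y)
  obtain ⟨q, hq, hqJ⟩ := exists_mem_notMem_of_card_lt_card
    (s := J) (t := nbrsIn G C x ∩ nbrsIn G C y) (by omega)
  simp only [mem_inter, mem_nbrsIn] at hq
  exact ((JoinedVia.of_adj hq.1.2).trans (mem_sdiff.2 ⟨hq.1.1, hqJ⟩)
    (JoinedVia.of_adj hq.2.2.symm)).mono (by norm_num)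

/-- `C` is the ball of radius two around `x`. A vertex outside it that has a neighbour in it is not
in the ball around `y` either, so the neighbourhoods of the three vertices would be disjoint. -/
theorem exists_subset_not_adj_sdiff (hK : #K < 3 * d)
    (hdeg : ∀ z ∈ insert x (insert y K), d ≤ #(nbrsIn G K z)) (h : ¬ JoinedVia G K 5 x y) :
    ∃ C ⊆ K, C.Nonempty ∧ (K \ C).Nonempty ∧ ∀ z ∈ C, ∀ w ∈ K \ C, ¬ G.Adj z w := by
  classical
  have h_one : ∀ u, ∀ z ∈ nbrsIn G K u, z ∈ K ∧ JoinedVia G K 1 u z := fun u z hz =>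
    ⟨(mem_nbrsIn.1 hz).1, .of_adj (mem_nbrsIn.1 hz).2⟩
  have h_far : ∀ z ∈ K, JoinedVia G K 3 x z → ¬ JoinedVia G K 2 z y := fun z hz hxz hzy =>
    h (hxz.trans hz hzy)
  have h_disjoint : ∀ u v, ¬ JoinedVia G K 2 u v → Disjoint (nbrsIn G K u) (nbrsIn G K v) :=
    fun u v huv => disjoint_left.2 fun z hzu hzv =>
      huv ((h_one u z hzu).2.trans (h_one u z hzu).1 (h_one v z hzv).2.symm)
  have h_nonempty : ∀ u ∈ insert x (insert y K), (nbrsIn G K u).Nonempty := fun u hu =>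
    card_pos.1 (by have := hdeg u hu; omega)
  have hxy : ¬ JoinedVia G K 2 x y := fun hxy => h (hxy.mono (by norm_num))
  refine ⟨{z ∈ K | JoinedVia G K 2 x z}, filter_subset _ _, ?_, ?_, fun z hz w hw hzw => ?_⟩
  · obtain ⟨z, hz⟩ := h_nonempty x (by simp)
    exact ⟨z, mem_filter.2 ⟨(h_one x z hz).1, (h_one x z hz).2.mono one_le_two⟩⟩
  · obtain ⟨z, hz⟩ := h_nonempty y (by simp)
    obtain ⟨hzK, hyz⟩ := h_one y z hz
    refine ⟨z, mem_sdiff.2 ⟨hzK, fun hzC => ?_⟩⟩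
    exact h_far z hzK ((mem_filter.1 hzC).2.mono (by norm_num)) (hyz.symm.mono one_le_two)
  · obtain ⟨hzK, hxz⟩ := mem_filter.1 hz
    have hwK : w ∈ K := (mem_sdiff.1 hw).1
    have hxw : ¬ JoinedVia G K 2 x w := by grind
    have hwy : ¬ JoinedVia G K 2 w y := h_far w hwK (hxz.trans hzK (.of_adj hzw))
    have h_union : nbrsIn G K x ∪ nbrsIn G K w ∪ nbrsIn G K y ⊆ K :=
      union_subset (union_subset nbrsIn_subset nbrsIn_subset) nbrsIn_subset
    have h_card := card_le_card h_union
    rw [card_union_of_disjoint (disjoint_union_left.2 ⟨h_disjoint x y hxy, h_disjoint w y hwy⟩),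
      card_union_of_disjoint (h_disjoint x w hxw)] at h_card
    have hx := hdeg x (by simp)
    have hy := hdeg y (by simp)
    have hw := hdeg w (by simp [hwK])
    omega

theorem exists_isRobust (hne : D.Nonempty) (hD : #D ≤ 3 * d) (hn : 2 * n ≤ d)
    (hdeg : ∀ x ∈ D, d + n ≤ #(nbrsIn G D x)) : ∃ D' ⊆ D, d < #D' ∧ IsRobust n G D' := by
  have h_deg_lt : ∀ S : Finset V, ∀ v ∈ S, #(nbrsIn G S v) < #S := fun S v hv =>
    (card_le_card nbrsIn_subset_erase).trans_lt (card_erase_lt_of_mem hv)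
  by_cases h_robust : IsRobust n G D
  · obtain ⟨x, hx⟩ := hne
    have := hdeg x hx
    have := h_deg_lt D x hx
    exact ⟨D, Subset.rfl, by omega, h_robust⟩
  simp only [IsRobust, not_forall] at h_robust
  obtain ⟨J, hJD, hJn, x, hx, y, hy, hxy⟩ := h_robust
  have hK_card := card_sdiff_add_card_eq_card hJD
  have hJ_pos : 0 < #J := card_pos.2 ⟨x, hx⟩
  have hK_deg : ∀ z ∈ D, d ≤ #(nbrsIn G (D \ J) z) := fun z hz => by
    have h_split := card_nbrsIn_union G (sdiff_disjoint : Disjoint (D \ J) J) z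
    rw [sdiff_union_of_subset hJD] at h_split
    have := hdeg z hz
    have : #(nbrsIn G J z) ≤ #J := card_le_card nbrsIn_subset
    omega
  have h_sub : insert x (insert y (D \ J)) ⊆ D := by
    simp [insert_subset_iff, hJD hx, hJD hy]
  obtain ⟨C, hCK, hC, hKC, h_not_adj⟩ :=
    exists_subset_not_adj_sdiff (by omega) (fun z hz => hK_deg z (h_sub hz)) hxy
  wlog h_small : 2 * #C ≤ #(D \ J) generalizing C
  · have h_card := card_sdiff_add_card_eq_card hCK
    have h_compl : (D \ J) \ ((D \ J) \ C) = C := Finset.sdiff_sdiff_eq_self hCK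
    exact this ((D \ J) \ C) sdiff_subset hKC (h_compl.symm ▸ hC)
      (fun z hz w hw hzw => h_not_adj w (h_compl ▸ hw) z hz hzw.symm) (by omega)
  have hC_deg : ∀ z ∈ C, d ≤ #(nbrsIn G C z) := fun z hz =>
    (hK_deg z (mem_sdiff.1 (hCK hz)).1).trans (card_le_card fun w hw => by
      have := h_not_adj z hz w
      grind [mem_nbrsIn])
  obtain ⟨z, hz⟩ := hC
  have hC_lt := (hC_deg z hz).trans_lt (h_deg_lt C z hz)
  refine ⟨C, hCK.trans sdiff_subset, hC_lt, isRobust_of_card_add_lt fun v hv => ?_⟩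
  have := hC_deg v hv
  omega

end Robust

/-! ### Massed pairs -/

section Massed

variable [DecidableEq V] {U X A B C D S S' T : Finset V} {k m n : ℕ} {u v : V}

/-- More than `k * #T` edges of `G[S ∪ T]` meet `T`, for disjoint `S` and `T`. -/
def IsDenseOver (k : ℕ) (G : SimpleGraph V) (S T : Finset V) : Prop :=
  2 * k * #T < outerCount G S T

/-- No separation of order less than `#X` cuts off from `X` a set that is dense over the cut. -/
def NoDenseCut (k : ℕ) (G : SimpleGraph V) (U X : Finset V) : Prop :=
  ∀ A B, IsSeparation G U A B → X ⊆ A → #(A ∩ B) < #X → ¬ IsDenseOver k G (A ∩ B) (B \ A)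

/-- The pair `(G[U], X)` is massed in the sense of Thomas and Wollan, with density `k`, and `X` has
at most `m` vertices. -/
structure IsMassed (k m : ℕ) (G : SimpleGraph V) (U X : Finset V) : Prop where
  subset : X ⊆ U
  card_le : #X ≤ m
  isDenseOver : IsDenseOver k G X (U \ X)
  noDenseCut : NoDenseCut k G U X

variable (V L) in
/-- Massed pairs on fewer than `n` vertices are linked: the induction hypothesis in the proof that
all massed pairs are. -/
def LinksMassedBelow (k m n : ℕ) : Prop :=
  ∀ (G : SimpleGraph V) (U X : Finset V), #U < n → IsMassed k m G U X → Linked L G U X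

omit [DecidableEq V] in
theorem IsDenseOver.nonempty (h : IsDenseOver k G S T) : T.Nonempty := by
  rw [nonempty_iff_ne_empty]
  rintro rfl
  simp [IsDenseOver, outerCount, dartCount] at h

omit [DecidableEq V] in
theorem IsDenseOver.mono (h : IsDenseOver k G S T)
    (hT : ∀ v ∈ T, ∀ w ∈ T, G.Adj v w → G'.Adj v w)
    (hS : ∀ t ∈ T, #(nbrsIn G S t) ≤ #(nbrsIn G' S' t)) : IsDenseOver k G' S' T :=
  lt_of_lt_of_le h (outerCount_mono hT hS)

theorem IsSeparation.isDenseOver_left (h : IsSeparation G U A B) (hX : X ⊆ A)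
    (hU : IsDenseOver k G X (U \ X)) (hB : ¬ IsDenseOver k G (A ∩ B) (B \ A)) :
    IsDenseOver k G X (A \ X) := by
  have h_union : U \ X = (A \ X) ∪ (B \ A) := by
    have := h.union_eq
    grind
  have h_disj : Disjoint (A \ X) (B \ A) := disjoint_sdiff.mono_left sdiff_subset
  have h_split := outerCount_union (G := G) disjoint_sdiff (disjoint_sdiff.mono_left hX) h_disj
  rw [union_sdiff_of_subset hX, h.outerCount_left_eq] at h_split
  unfold IsDenseOver at *
  rw [h_union, h_split, card_union_of_disjoint h_disj, mul_add] at hU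
  omega

theorem IsMassed.of_dense_cut (h : IsMassed k m G U X) (hAB : IsSeparation G U A B) (hX : X ⊆ A)
    (hc : #(A ∩ B) ≤ #X) (h_dense : IsDenseOver k G (A ∩ B) (B \ A)) :
    IsMassed k m G B (A ∩ B) where
  subset := inter_subset_right
  card_le := hc.trans h.card_le
  isDenseOver := by rwa [sdiff_inter_self_right]
  noDenseCut A' B' h' hA' h_lt := fun h_dense' => by
    have h_eq := h'.union_inter_eq hA'
    have h_sub : B' \ (A ∪ A') = B' \ A' := by
      have := h'.union_eq
      grind
    refine h.noDenseCut _ _ (hAB.union_left h') (hX.trans subset_union_left) ?_ ?_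
    · rw [h_eq]; omega
    · rwa [h_eq, h_sub]

theorem exists_isMassed_of_not_noDenseCut (h : ¬ NoDenseCut k G U X) (hm : #X ≤ m) :
    ∃ A B, IsSeparation G U A B ∧ X ⊆ A ∧ #(A ∩ B) < #X ∧ IsMassed k m G B (A ∩ B) := by
  let P : Finset V × Finset V → Prop := fun E => IsSeparation G U E.1 E.2 ∧ X ⊆ E.1 ∧
    #(E.1 ∩ E.2) < #X ∧ IsDenseOver k G (E.1 ∩ E.2) (E.2 \ E.1)
  have hP : ∃ E, P E := by
    simp only [NoDenseCut, not_forall, not_not] at h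
    obtain ⟨A, B, hAB, hX, h_lt, h_dense⟩ := h
    exact ⟨(A, B), hAB, hX, h_lt, h_dense⟩
  obtain ⟨⟨A, B⟩, ⟨hAB, hX, h_lt, h_dense⟩, hmin⟩ :=
    exists_minimalFor_of_wellFoundedLT P (fun E => #E.2) hP
  refine ⟨A, B, hAB, hX, h_lt, inter_subset_right, h_lt.le.trans hm, ?_, ?_⟩
  · rwa [sdiff_inter_self_right]
  intro A' B' h' hA' h_lt' h_dense'
  have h_eq := h'.union_inter_eq hA'
  have h_sub : B' \ (A ∪ A') = B' \ A' := by
    have := h'.union_eq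
    grind
  have hB'_card : #B ≤ #B' := by
    have hP' : P (A ∪ A', B') := ⟨hAB.union_left h', hX.trans subset_union_left,
      by rw [h_eq]; exact h_lt'.trans h_lt, by rwa [h_eq, h_sub]⟩
    by_contra! h_card
    exact h_card.not_ge (hmin hP' h_card.le)
  have hB' : B' = B := eq_of_subset_of_card_le h'.right_subset hB'_card
  exact h_lt'.not_ge (card_le_card (subset_inter hA' (hB' ▸ inter_subset_right)))

/-- `G` together with all edges between vertices of `S`. -/
def withClique (G : SimpleGraph V) (S : Finset V) : SimpleGraph V :=
  G ⊔ SimpleGraph.fromRel fun a b => a ∈ S ∧ b ∈ S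

omit [DecidableEq V] in
theorem withClique_adj : (withClique G S).Adj u v ↔ G.Adj u v ∨ u ≠ v ∧ u ∈ S ∧ v ∈ S := by
  simp only [withClique, SimpleGraph.sup_adj, SimpleGraph.fromRel_adj]
  tauto

omit [DecidableEq V] in
theorem le_withClique : G ≤ withClique G S := le_sup_left

theorem IsSeparation.subset_or_subset_of_withClique (h : IsSeparation (withClique G S) U A B)
    (hS : S ⊆ U) : S ⊆ A ∨ S ⊆ B := by
  by_contra! h_not
  obtain ⟨⟨b, hb, hbA⟩, ⟨a, ha, haB⟩⟩ := And.imp not_subset.1 not_subset.1 h_not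
  have h_union := h.union_eq
  have haA : a ∈ A := by grind
  exact h.not_adj a haA haB b (by grind) hbA
    (withClique_adj.2 (.inr ⟨ne_of_mem_of_not_mem haA hbA, ha, hb⟩))

/-- An edge of the clique on `S` is replaced by a path of the linkage of `S` in `B`. -/
theorem Linked.of_withClique (h : Linked L (withClique G S) A X) (hB : Linked L G B S)
    (hAB : A ∩ B ⊆ S) (hX : X ⊆ A) : Linked L G (A ∪ B) X := fun l => by
  obtain ⟨f₁, hf₁l, hf₁⟩ := h l
  obtain ⟨f₂, hf₂S, hf₂⟩ := hB f₁
  let f : V → L := fun v => if v ∈ A then f₁ v else f₂ v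
  have hfA : ∀ v ∈ A, f v = f₁ v := fun v hv => if_pos hv
  have hfB : ∀ v ∈ B, f v = f₂ v := fun v hv => by
    by_cases hvA : v ∈ A
    · rw [hfA v hvA, hf₂S v (hAB (mem_inter.2 ⟨hvA, hv⟩))]
    · exact if_neg hvA
  refine ⟨f, fun x hx => (hfA x (hX hx)).trans (hf₁l x hx), fun x hx y hy hxy =>
    reachable_of_forall_adj (hf₁ x hx y hy hxy) fun v w _ hvw => ?_⟩
  obtain ⟨hadj, hv, hw, hfvw⟩ := hvw
  rcases withClique_adj.1 hadj with hadj | ⟨-, hvS, hwS⟩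
  · have h_edge : (monoGraph G (A ∪ B) f).Adj v w :=
      ⟨hadj, mem_union_left B hv, mem_union_left B hw, by rw [hfA v hv, hfA w hw, hfvw]⟩
    exact h_edge.reachable
  · exact (hf₂ v hvS w hwS hfvw).mono (monoGraph_le_monoGraph (fun _ _ _ _ => id)
      subset_union_right fun a ha b hb hab => by rw [hfB a ha, hfB b hb, hab])

namespace IsMassed

/-- A dense cut of `A` with the clique added either leaves the clique on the side of `X`, and then
is a dense cut of `U`, or moves the linked side towards `X`. -/
theorem exists_ssubset_of_not_noDenseCut (h : IsMassed k m G U X)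
    (ih : LinksMassedBelow V L k m #U) (hAB : IsSeparation G U A B) (hX : X ⊆ A)
    (hA : A ≠ U) (hB : Linked L G B (A ∩ B))
    (h_cut : ¬ NoDenseCut k (withClique G (A ∩ B)) A X) :
    ∃ A' ⊂ A, ∃ B', IsSeparation G U A' B' ∧ X ⊆ A' ∧ #(A' ∩ B') < #X ∧
      Linked L G B' (A' ∩ B') := by
  obtain ⟨C, D, hCD, hXC, h_lt, h_massed⟩ := exists_isMassed_of_not_noDenseCut h_cut h.card_le
  have hCD' := hCD.anti le_withClique
  have hA_lt : #A < #U :=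
    card_lt_card (Finset.ssubset_iff_subset_ne.2 ⟨hAB.left_subset, hA⟩)
  have h_union := hAB.union_eq
  have hC_sub := hCD.left_subset
  have hD_sub := hCD.right_subset
  have h_dense := h_massed.isDenseOver
  rw [sdiff_inter_self_right] at h_dense
  rcases hCD.subset_or_subset_of_withClique inter_subset_left with hC | hD
  · have h_sep := hAB.symm.union_left hCD'
    have h_inter : (B ∪ C) ∩ D = C ∩ D := hCD'.union_inter_eq (inter_comm A B ▸ hC)
    have h_sdiff : D \ (B ∪ C) = D \ C := by grind
    have h_adj : ∀ v ∈ D \ C, ∀ w, (withClique G (A ∩ B)).Adj v w → G.Adj v w := by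
      intro v hv w hvw
      rcases withClique_adj.1 hvw with hvw | ⟨-, hv', -⟩
      · exact hvw
      · exact absurd (hC hv') (mem_sdiff.1 hv).2
    refine absurd ?_ (h.noDenseCut _ _ h_sep (hXC.trans subset_union_right) (h_inter ▸ h_lt))
    rw [h_inter, h_sdiff]
    exact h_dense.mono (fun v hv w _ => h_adj v hv w)
      fun t ht => card_nbrsIn_mono Subset.rfl fun w _ => h_adj t ht w
  · have h_linked : Linked L G (D ∪ B) (C ∩ D) :=
      (ih _ _ _ ((card_le_card hD_sub).trans_lt hA_lt) h_massed).of_withClique hB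
        (by grind) inter_subset_right
    have h_inter : C ∩ (D ∪ B) = C ∩ D := by grind
    have h_sep : IsSeparation G U C (D ∪ B) :=
      union_comm B D ▸ (hAB.symm.union_left hCD'.symm).symm
    have hC_ssub : C ⊂ A := Finset.ssubset_iff_subset_ne.2 ⟨hC_sub, by
      rintro rfl
      obtain ⟨t, ht⟩ := h_dense.nonempty
      grind⟩
    exact ⟨C, hC_ssub, D ∪ B, h_sep, hXC, h_inter ▸ h_lt, h_inter ▸ h_linked⟩

theorem linked_of_separation_lt (h : IsMassed k m G U X) (ih : LinksMassedBelow V L k m #U)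
    (hAB : IsSeparation G U A B) (hX : X ⊆ A) (h_lt : #(A ∩ B) < #X) (hA : A ≠ U)
    (hB : Linked L G B (A ∩ B)) : Linked L G U X := by
  induction A using Finset.strongInduction generalizing B with
  | H A ih_A =>
  by_cases h_cut : NoDenseCut k (withClique G (A ∩ B)) A X
  · have hA_lt : #A < #U :=
      card_lt_card (Finset.ssubset_iff_subset_ne.2 ⟨hAB.left_subset, hA⟩)
    have h_dense : IsDenseOver k (withClique G (A ∩ B)) X (A \ X) :=
      (hAB.isDenseOver_left hX h.isDenseOver (h.noDenseCut A B hAB hX h_lt)).mono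
        (fun v _ w _ hvw => le_withClique hvw)
        fun t _ => card_nbrsIn_mono Subset.rfl fun w _ hvw => le_withClique hvw
    rw [← hAB.union_eq]
    exact (ih _ A X hA_lt ⟨hX, h.card_le, h_dense, h_cut⟩).of_withClique hB Subset.rfl hX
  · obtain ⟨A', hA', B', hAB', hX', h_lt', hB'⟩ :=
      h.exists_ssubset_of_not_noDenseCut ih hAB hX hA hB h_cut
    have hA'_ne : A' ≠ U := (hA'.trans_subset hAB.left_subset).ne
    exact ih_A A' hA' hAB' hX' h_lt' hA'_ne hB'

theorem linked_of_separation (h : IsMassed k m G U X) (ih : LinksMassedBelow V L k m #U)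
    (hAB : IsSeparation G U A B) (hX : X ⊆ A) (hc : #(A ∩ B) ≤ #X) (hA : A ≠ U)
    (hB : Linked L G B (A ∩ B)) : Linked L G U X := by
  rcases hc.lt_or_eq with h_lt | h_eq
  · exact h.linked_of_separation_lt ih hAB hX h_lt hA hB
  obtain ⟨A', B', hAB', hX', hZ, h_conn⟩ :=
    exists_minimum_separation (G := G) hX (inter_subset_left : A ∩ B ⊆ A)
  by_cases h_card : #X ≤ #(A' ∩ B')
  · have h_link : Link G A X (A ∩ B) := menger hX inter_subset_left
      fun _ _ h_sep hXA hZB => h_card.trans (h_conn _ _ h_sep hXA hZB)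
    exact hAB.union_eq ▸ h_link.linked fun Y hY _ => hB.subset hY
  · have hB'_sub := hAB'.right_subset
    have h_link : Link G B' (A' ∩ B') (B' ∩ B) := by
      have h_inter : B' ∩ B = A ∩ B := by grind
      rw [h_inter]
      exact menger inter_subset_right hZ (h_conn.right_side hAB' hX' Subset.rfl)
    have h_linked : Linked L G (B' ∪ B) (A' ∩ B') :=
      h_link.linked fun Y hY _ => hB.subset (by grind)
    have h_inter : A' ∩ (B' ∪ B) = A' ∩ B' := by
      have := hAB'.left_subset
      grind
    have h_sep : IsSeparation G U A' (B' ∪ B) :=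
      union_comm B B' ▸ (hAB.symm.union_left hAB'.symm).symm
    have hA'_ne : A' ≠ U := fun h_eq =>
      hA (hAB.left_subset.antisymm (h_eq ▸ hAB'.left_subset))
    exact h.linked_of_separation_lt ih h_sep hX' (by rw [h_inter]; omega) hA'_ne
      (h_inter ▸ h_linked)

theorem linked_of_dense_cut (h : IsMassed k m G U X) (ih : LinksMassedBelow V L k m #U)
    (hAB : IsSeparation G U A B) (hX : X ⊆ A) (hXB : ¬ X ⊆ B) (hc : #(A ∩ B) ≤ #X)
    (h_dense : IsDenseOver k G (A ∩ B) (B \ A)) : Linked L G U X := by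
  have hB_ssub : B ⊂ U := Finset.ssubset_iff_subset_ne.2
    ⟨hAB.right_subset, fun h_eq => hXB (h_eq ▸ h.subset)⟩
  have hA_ne : A ≠ U := by
    rintro rfl
    obtain ⟨b, hb⟩ := h_dense.nonempty
    have := hAB.right_subset
    grind
  exact h.linked_of_separation ih hAB hX hc hA_ne
    (ih G B (A ∩ B) (card_lt_card hB_ssub) (h.of_dense_cut hAB hX hc h_dense))

theorem linked_of_dense_cut_insert (h : IsMassed k m G U X) (ih : LinksMassedBelow V L k m #U)
    (hAB : IsSeparation G U A B) (hX : X ⊆ A) (hv : v ∉ X) (h_inter : A ∩ B = insert v S)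
    (hc : #S < #X) (h_dense : IsDenseOver k G (insert v S) (B \ A)) : Linked L G U X := by
  refine h.linked_of_dense_cut ih hAB hX (fun hXB => ?_) ?_ (h_inter ▸ h_dense)
  · have hXS : X ⊆ S := by
      rw [← subset_insert_iff_of_notMem hv, ← h_inter]
      exact subset_inter hX hXB
    exact hc.not_ge (card_le_card hXS)
  · rw [h_inter]
    exact (card_insert_le v S).trans hc

theorem linked_of_card_nbrsIn_le (h : IsMassed k m G U X) (ih : LinksMassedBelow V L k m #U)
    (hv : v ∈ U \ X) (hk : #(nbrsIn G U v) ≤ k) : Linked L G U X := by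
  obtain ⟨hvU, hvX⟩ := mem_sdiff.1 hv
  have hX : X ⊆ U.erase v := subset_erase.2 ⟨h.subset, hvX⟩
  by_cases h_cut : NoDenseCut k G (U.erase v) X
  · have h_dense : IsDenseOver k G X (U.erase v \ X) := by
      have h_card : #(U \ X) = #(U.erase v \ X) + 1 := by
        rw [erase_sdiff_comm, card_erase_add_one hv]
      have h_count := h.isDenseOver
      rw [IsDenseOver, h_card, outerCount_sdiff_eq_add h.subset hvU hvX] at h_count
      unfold IsDenseOver
      linarith
    exact (ih G _ X (card_erase_lt_of_mem hvU) ⟨hX, h.card_le, h_dense, h_cut⟩).mono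
      (fun _ _ _ _ => id) (erase_subset v U)
  · obtain ⟨A, B, hAB, hXA, h_lt, h_massed⟩ := exists_isMassed_of_not_noDenseCut h_cut h.card_le
    have hB := hAB.right_subset
    have h_sdiff : insert v B \ insert v A = B \ (A ∩ B) := by grind
    refine h.linked_of_dense_cut_insert ih (hAB.insert_insert hvU)
      (hXA.trans (subset_insert v A)) hvX (insert_inter_distrib A B v).symm h_lt ?_
    rw [h_sdiff]
    exact h_massed.isDenseOver.mono (fun _ _ _ _ => id)
      fun _ _ => card_nbrsIn_mono (subset_insert _ _) fun _ _ => id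

theorem linked_of_adj_of_lt (h : IsMassed k m G U X) (ih : LinksMassedBelow V L k m #U)
    (ih_del : ∀ G', dartCount G' U < dartCount G U → IsMassed k m G' U X → Linked L G' U X)
    (hu : u ∈ U \ X) (hv : v ∈ U \ X) (huv : G.Adj u v)
    (h_lt : 2 * k * #(U \ X) + 2 < outerCount G X (U \ X)) : Linked L G U X := by
  obtain ⟨huU, huX⟩ := mem_sdiff.1 hu
  obtain ⟨hvU, hvX⟩ := mem_sdiff.1 hv
  have hle : G.deleteEdges {s(u, v)} ≤ G := SimpleGraph.deleteEdges_le _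
  by_cases h_cut : NoDenseCut k (G.deleteEdges {s(u, v)}) U X
  · have h_dense : IsDenseOver k (G.deleteEdges {s(u, v)}) X (U \ X) := by
      have h_count := dartCount_le_deleteEdges_add_two (G := G) (w := v) huU
      have h_mono : dartCount (G.deleteEdges {s(u, v)}) X ≤ dartCount G X :=
        dartCount_mono_graph fun _ _ _ _ hab => hle hab
      rw [dartCount_eq_add_outerCount _ h.subset, dartCount_eq_add_outerCount _ h.subset]
        at h_count
      unfold IsDenseOver
      omega
    exact (ih_del _ (dartCount_deleteEdges_lt huU hvU huv)
      ⟨h.subset, h.card_le, h_dense, h_cut⟩).mono (fun _ _ _ _ hab => hle hab) Subset.rfl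
  simp only [NoDenseCut, not_forall, not_not] at h_cut
  obtain ⟨A, B, hAB, hXA, h_lt, h_dense⟩ := h_cut
  by_cases h_sep : IsSeparation G U A B
  · exact absurd (h_dense.mono (fun _ _ _ _ hab => hle hab)
      fun _ _ => card_nbrsIn_mono Subset.rfl fun _ _ hab => hle hab)
      (h.noDenseCut A B h_sep hXA h_lt)
  obtain ⟨c, hc, d, -, -, h_eq⟩ := exists_crossing_of_deleteEdges hAB h_sep
  have hcA := (mem_sdiff.1 hc).1
  have hcX : c ∉ X := by
    rcases Sym2.eq_iff.1 h_eq with ⟨rfl, -⟩ | ⟨rfl, -⟩ <;> assumption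
  have h_sdiff : insert c B \ A = B \ A := insert_sdiff_of_mem B hcA
  refine h.linked_of_dense_cut_insert ih ((h_eq ▸ hAB).insert_of_deleteEdges hcA) hXA hcX
    (inter_insert_of_mem hcA) h_lt ?_
  rw [h_sdiff]
  exact h_dense.mono (fun _ _ _ _ hab => hle hab)
    fun _ _ => card_nbrsIn_mono (subset_insert _ _) fun _ _ hab => hle hab

end IsMassed

/-- The contraction of the edge `uv` into `u`, to be used on vertex sets without `v`. -/
def contract (G : SimpleGraph V) (u v : V) : SimpleGraph V :=
  G ⊔ SimpleGraph.fromRel fun a b => a = u ∧ G.Adj v b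

section Contract

variable {a b t : V}

omit [DecidableEq V] in
theorem contract_adj : (contract G u v).Adj a b ↔
    G.Adj a b ∨ a ≠ b ∧ (a = u ∧ G.Adj v b ∨ b = u ∧ G.Adj v a) :=
  .rfl

omit [DecidableEq V] in
theorem le_contract : G ≤ contract G u v := le_sup_left

omit [DecidableEq V] in
theorem adj_of_contract_adj (h : (contract G u v).Adj a b) (ha : a ≠ u) (hb : b ≠ u) :
    G.Adj a b := by
  rw [contract_adj] at h
  tauto

theorem Linked.of_contract (h : Linked L (contract G u v) B S) (hS : S ⊆ B) (hu : u ∈ B)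
    (hv : v ∉ B) (huv : G.Adj u v) : Linked L G (insert v B) S := fun l => by
  obtain ⟨f, hfl, hf⟩ := h l
  let f' : V → L := Function.update f v (f u)
  have hf'v : f' v = f u := Function.update_self _ _ _
  have hf' : ∀ w ∈ B, f' w = f w := fun w hw =>
    Function.update_of_ne (ne_of_mem_of_not_mem hw hv) _ _
  have hB : ∀ w ∈ B, w ∈ insert v B := fun w => mem_insert_of_mem
  have hvB := mem_insert_self v B
  have h_uv : (monoGraph G (insert v B) f').Adj u v := ⟨huv, hB u hu, hvB, by rw [hf' u hu, hf'v]⟩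
  have h_via : ∀ b ∈ B, G.Adj v b → f b = f u →
      (monoGraph G (insert v B) f').Reachable u b := fun b hb hvb hfb => by
    have h_vb : (monoGraph G (insert v B) f').Adj v b :=
      ⟨hvb, hvB, hB b hb, by rw [hf'v, hf' b hb, hfb]⟩
    exact h_uv.reachable.trans h_vb.reachable
  refine ⟨f', fun x hx => (hf' x (hS hx)).trans (hfl x hx), fun x hx y hy hxy =>
    reachable_of_forall_adj (hf x hx y hy hxy) fun a b _ hab => ?_⟩
  obtain ⟨hadj, ha, hb, hfab⟩ := hab
  rcases contract_adj.1 hadj with hadj | ⟨-, ⟨rfl, hvb⟩ | ⟨rfl, hva⟩⟩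
  · have h_ab : (monoGraph G (insert v B) f').Adj a b :=
      ⟨hadj, hB a ha, hB b hb, by rw [hf' a ha, hf' b hb, hfab]⟩
    exact h_ab.reachable
  · exact h_via b hb hvb hfab.symm
  · exact (h_via a ha hva hfab).symm

theorem card_nbrsIn_contract_le (hv : v ∉ S) (ht : t ≠ u) :
    #(nbrsIn (contract G u v) S t) ≤ #(nbrsIn G (insert v S) t) := by
  by_cases hvt : G.Adj v t
  · have h_sub : nbrsIn (contract G u v) S t ⊆ insert u (nbrsIn G S t) := fun b hb => by
      obtain ⟨hbS, htb⟩ := mem_nbrsIn.1 hb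
      rw [mem_insert, mem_nbrsIn, or_iff_not_imp_left]
      exact fun hbu => ⟨hbS, adj_of_contract_adj htb ht hbu⟩
    have h_insert : nbrsIn G (insert v S) t = insert v (nbrsIn G S t) := by
      have := hvt.symm
      grind [mem_nbrsIn]
    rw [h_insert, card_insert_of_notMem fun h => hv (nbrsIn_subset h)]
    exact (card_le_card h_sub).trans (card_insert_le _ _)
  · refine card_nbrsIn_mono (subset_insert v S) fun b _ htb => ?_
    rw [contract_adj] at htb
    tauto

theorem card_nbrsIn_add_card_nbrsIn_le_contract :
    #(nbrsIn G U u) + #(nbrsIn G U v) ≤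
      #(nbrsIn (contract G u v) (U.erase v) u) + #(nbrsIn G U u ∩ nbrsIn G U v) + 2 := by
  have h_sub : nbrsIn G U u ∪ nbrsIn G U v ⊆
      insert u (insert v (nbrsIn (contract G u v) (U.erase v) u)) := fun b hb => by
    simp only [mem_union, mem_insert, mem_nbrsIn, mem_erase, contract_adj] at hb ⊢
    grind
  have h_card := (card_le_card h_sub).trans ((card_insert_le _ _).trans
    (Nat.add_le_add_right (card_insert_le _ _) 1))
  have := card_union_add_card_inter (nbrsIn G U u) (nbrsIn G U v)
  omega

theorem outerCount_le_contract (hX : X ⊆ U) (hu : u ∈ U \ X) (hv : v ∈ U \ X) (huv : G.Adj u v) :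
    outerCount G X (U \ X) ≤ outerCount (contract G u v) X (U.erase v \ X) +
      2 * #(nbrsIn G U u ∩ nbrsIn G U v) + 2 := by
  obtain ⟨huU, huX⟩ := mem_sdiff.1 hu
  obtain ⟨hvU, hvX⟩ := mem_sdiff.1 hv
  have hX' : X ⊆ U.erase v := subset_erase.2 ⟨hX, hvX⟩
  have hu' : u ∈ U.erase v := mem_erase.2 ⟨huv.ne, huU⟩
  have h_rest : outerCount G X ((U.erase v).erase u \ X) ≤
      outerCount (contract G u v) X ((U.erase v).erase u \ X) :=
    outerCount_mono (fun _ _ _ _ hab => le_contract hab)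
      fun _ _ => card_nbrsIn_mono Subset.rfl fun _ _ hab => le_contract hab
  have h_nbrs := card_nbrsIn_add_card_nbrsIn_le_contract (G := G) (U := U) (u := u) (v := v)
  have h_nbrs_u : #(nbrsIn G (U.erase v) u) + 1 = #(nbrsIn G U u) := by
    have h_erase : nbrsIn G (U.erase v) u = (nbrsIn G U u).erase v := by grind [mem_nbrsIn]
    rw [h_erase, card_erase_add_one (mem_nbrsIn.2 ⟨hvU, huv⟩)]
  rw [outerCount_sdiff_eq_add hX hvU hvX, outerCount_sdiff_eq_add hX' hu' huX,
    outerCount_sdiff_eq_add (G := contract G u v) hX' hu' huX]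
  omega

theorem IsSeparation.insert_of_contract (h : IsSeparation (contract G u v) (U.erase v) A B)
    (hv : v ∈ U) (hu : u ∈ A) (huB : u ∉ B) : IsSeparation G U (insert v A) B := by
  refine ⟨by rw [insert_union, h.union_eq, insert_erase hv], fun a ha haB b hb hbA hab => ?_⟩
  have hbA' : b ∉ A := fun hb => hbA (mem_insert_of_mem hb)
  rcases mem_insert.1 ha with rfl | ha
  · exact h.not_adj u hu huB b hb hbA'
      (contract_adj.2 (.inr ⟨ne_of_mem_of_not_mem hu hbA', .inl ⟨rfl, hab⟩⟩))
  · exact h.not_adj a ha haB b hb hbA' (le_contract hab)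

end Contract

theorem IsMassed.linked_of_contract_cut (h : IsMassed k m G U X)
    (ih : LinksMassedBelow V L k m #U) (hu : u ∈ U \ X) (hv : v ∈ U \ X) (huv : G.Adj u v)
    (hAB : IsSeparation (contract G u v) (U.erase v) A B) (hX : X ⊆ A) (h_lt : #(A ∩ B) < #X)
    (h_massed : IsMassed k m (contract G u v) B (A ∩ B)) : Linked L G U X := by
  obtain ⟨huU, -⟩ := mem_sdiff.1 hu
  obtain ⟨hvU, hvX⟩ := mem_sdiff.1 hv
  have hvA : v ∉ A := fun hvA => notMem_erase v U (hAB.left_subset hvA)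
  have hvB : v ∉ B := fun hvB => notMem_erase v U (hAB.right_subset hvB)
  have hB_lt : #B < #U := (card_le_card hAB.right_subset).trans_lt (card_erase_lt_of_mem hvU)
  have h_linked : Linked L (contract G u v) B (A ∩ B) := ih _ _ _ hB_lt h_massed
  by_cases huB : u ∈ B
  · by_cases huA : u ∈ A
    · have h_sdiff : insert v B \ insert v A = B \ (A ∩ B) := by grind
      refine h.linked_of_dense_cut_insert ih ((hAB.anti le_contract).insert_insert hvU)
        (hX.trans (subset_insert v A)) hvX (insert_inter_distrib A B v).symm h_lt ?_
      rw [h_sdiff]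
      exact h_massed.isDenseOver.mono
        (fun a ha b hb hab => adj_of_contract_adj hab (by grind) (by grind))
        fun t ht => card_nbrsIn_contract_le (by grind) (by grind)
    · have h_inter : A ∩ insert v B = A ∩ B := inter_insert_of_notMem hvA
      have h_sep : IsSeparation G U A (insert v B) :=
        (hAB.symm.insert_of_contract hvU huB huA).symm
      refine h.linked_of_separation ih h_sep hX (h_inter ▸ h_lt.le)
        (fun h_eq => hvA (h_eq ▸ hvU)) ?_
      rw [h_inter]
      exact h_linked.of_contract inter_subset_right huB hvB huv
  · have huA : u ∈ A := by
      have hu_union : u ∈ A ∪ B := hAB.union_eq ▸ mem_erase.2 ⟨huv.ne, huU⟩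
      exact (mem_union.1 hu_union).resolve_right huB
    have h_inter : insert v A ∩ B = A ∩ B := insert_inter_of_notMem hvB
    refine h.linked_of_separation ih (hAB.insert_of_contract hvU huA huB)
      (hX.trans (subset_insert v A)) (h_inter ▸ h_lt.le) ?_ ?_
    · rintro h_eq
      obtain ⟨t, ht⟩ := h_massed.isDenseOver.nonempty
      have := hAB.right_subset
      grind
    · rw [h_inter]
      exact h_linked.mono (fun a ha b hb hab => adj_of_contract_adj hab
        (ne_of_mem_of_not_mem ha huB) (ne_of_mem_of_not_mem hb huB)) Subset.rfl

theorem IsMassed.linked_of_card_inter_lt (h : IsMassed k m G U X)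
    (ih : LinksMassedBelow V L k m #U) (hu : u ∈ U \ X) (hv : v ∈ U \ X) (huv : G.Adj u v)
    (h_common : #(nbrsIn G U u ∩ nbrsIn G U v) < k) : Linked L G U X := by
  obtain ⟨huU, -⟩ := mem_sdiff.1 hu
  obtain ⟨hvU, hvX⟩ := mem_sdiff.1 hv
  have hX : X ⊆ U.erase v := subset_erase.2 ⟨h.subset, hvX⟩
  by_cases h_cut : NoDenseCut k (contract G u v) (U.erase v) X
  · have h_dense : IsDenseOver k (contract G u v) X (U.erase v \ X) := by
      have h_card : #(U \ X) = #(U.erase v \ X) + 1 := by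
        rw [erase_sdiff_comm, card_erase_add_one hv]
      have h_count := h.isDenseOver.trans_le (outerCount_le_contract h.subset hu hv huv)
      rw [h_card] at h_count
      unfold IsDenseOver
      linarith
    have h_linked : Linked L (contract G u v) (U.erase v) X :=
      ih _ _ _ (card_erase_lt_of_mem hvU) ⟨hX, h.card_le, h_dense, h_cut⟩
    exact insert_erase hvU ▸
      h_linked.of_contract hX (mem_erase.2 ⟨huv.ne, huU⟩) (notMem_erase v U) huv
  · obtain ⟨A, B, hAB, hXA, h_lt, h_massed⟩ := exists_isMassed_of_not_noDenseCut h_cut h.card_le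
    exact h.linked_of_contract_cut ih hu hv huv hAB hXA h_lt h_massed

theorem IsMassed.linked_of_isRobust (h : IsMassed k m G U X) (ih : LinksMassedBelow V L k m #U)
    (hD : IsRobust n G D) (hDU : D ⊆ U) (hn : 5 * #X ≤ n) (hXD : #X < #D) : Linked L G U X := by
  obtain ⟨A, B, hAB, hXA, hDB, h_conn⟩ := exists_minimum_separation (G := G) h.subset hDU
  have hc : #(A ∩ B) ≤ #X := by
    simpa only [inter_eq_left.2 h.subset] using h_conn X U (.of_subset h.subset) Subset.rfl hDU
  have hBD : B ∩ D = D := inter_eq_right.2 hDB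
  have h_link : Link G B (A ∩ B) (B ∩ D) :=
    menger inter_subset_right inter_subset_left
      (hBD.symm ▸ h_conn.right_side hAB hXA Subset.rfl)
  have hB : Linked L G (B ∪ D) (A ∩ B) := h_link.linked fun Y hY hY_card =>
    hD.linked (hBD ▸ hY) (by omega)
  rw [union_eq_left.2 hDB] at hB
  refine h.linked_of_separation ih hAB hXA hc ?_ hB
  rintro rfl
  have hD_card : #D ≤ #(A ∩ B) := card_le_card (subset_inter hDU hDB)
  omega

theorem exists_subset_card_le_of_common_nbrs {c : ℕ} (hdeg : ∀ v ∈ S, c ≤ #(nbrsIn G S v))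
    (h_common : ∀ u ∈ S, ∀ v ∈ S, G.Adj u v → c ≤ #(nbrsIn G S u ∩ nbrsIn G S v) + 1)
    (h_edges : dartCount G S < #S * (n + 1)) :
    ∃ D ⊆ S, D.Nonempty ∧ #D ≤ n + 1 ∧ ∀ x ∈ D, c ≤ #(nbrsIn G D x) := by
  obtain ⟨v, hv, hvn⟩ : ∃ v ∈ S, #(nbrsIn G S v) < n + 1 := by
    by_contra! h_large
    exact h_edges.not_ge (card_nsmul_le_sum S _ (n + 1) h_large)
  refine ⟨insert v (nbrsIn G S v), insert_subset hv nbrsIn_subset, insert_nonempty _ _,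
    (card_insert_le _ _).trans hvn, fun x hx => ?_⟩
  rcases mem_insert.1 hx with rfl | hx
  · exact (hdeg x hv).trans (card_le_card fun w hw => by grind [mem_nbrsIn])
  · obtain ⟨hxS, hvx⟩ := mem_nbrsIn.1 hx
    have hv_notMem : v ∉ nbrsIn G S v ∩ nbrsIn G S x := by simp
    calc c ≤ #(nbrsIn G S v ∩ nbrsIn G S x) + 1 := h_common v hv x hxS hvx
      _ = #(insert v (nbrsIn G S v ∩ nbrsIn G S x)) := (card_insert_of_notMem hv_notMem).symm
      _ ≤ _ := card_le_card fun w hw => by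
        have := hvx.symm
        grind [mem_nbrsIn]

theorem IsMassed.exists_isRobust_of_forall_le (h : IsMassed k m G U X) (hk : 18 * m ≤ k)
    (hdeg : ∀ v ∈ U \ X, k < #(nbrsIn G U v))
    (h_common : ∀ u ∈ U \ X, ∀ v ∈ U \ X, G.Adj u v → k ≤ #(nbrsIn G U u ∩ nbrsIn G U v))
    (h_edges : outerCount G X (U \ X) ≤ 2 * k * #(U \ X) + 2) :
    ∃ D ⊆ U, m < #D ∧ IsRobust (5 * m) G D := by
  have hU : X ∪ U \ X = U := union_sdiff_of_subset h.subset
  have hX := h.card_le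
  have h_nbrs_X : ∀ v, #(nbrsIn G X v) ≤ m := fun v => (card_le_card nbrsIn_subset).trans hX
  have hdeg' : ∀ v ∈ U \ X, k + 1 - m ≤ #(nbrsIn G (U \ X) v) := fun v hv => by
    have h_deg := hdeg v hv
    have h_split := card_nbrsIn_union G (disjoint_sdiff : Disjoint X (U \ X)) v
    rw [hU] at h_split
    have := h_nbrs_X v
    omega
  have h_common' : ∀ u ∈ U \ X, ∀ v ∈ U \ X, G.Adj u v →
      k + 1 - m ≤ #(nbrsIn G (U \ X) u ∩ nbrsIn G (U \ X) v) + 1 := fun u hu v hv huv => by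
    have h_sub : nbrsIn G U u ∩ nbrsIn G U v ⊆
        X ∪ (nbrsIn G (U \ X) u ∩ nbrsIn G (U \ X) v) := by grind [mem_nbrsIn]
    have h_card := (card_le_card h_sub).trans (card_union_le _ _)
    have := h_common u hu v hv huv
    omega
  have h_edges' : dartCount G (U \ X) < #(U \ X) * (2 * k + 2 + 1) := by
    have h_pos := h.isDenseOver.nonempty.card_pos
    have h_le := (Nat.le_add_right _ _).trans h_edges
    linarith
  obtain ⟨D, hDU, hD, hD_card, hD_deg⟩ :=
    exists_subset_card_le_of_common_nbrs hdeg' h_common' h_edges'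
  obtain ⟨D', hD', hD'_card, h_robust⟩ := exists_isRobust
    (d := k + 1 - 6 * m) (n := 5 * m) hD (by omega) (by omega)
    fun x hx => (hD_deg x hx).trans' (by omega)
  exact ⟨D', hD'.trans (hDU.trans sdiff_subset), by omega, h_robust⟩

theorem IsMassed.linked_of_forall_dartCount_lt (h : IsMassed k m G U X) (hk : 18 * m ≤ k)
    (ih : LinksMassedBelow V L k m #U)
    (ih_del : ∀ G', dartCount G' U < dartCount G U → IsMassed k m G' U X → Linked L G' U X) :
    Linked L G U X := by
  by_contra h_not
  have hdeg : ∀ v ∈ U \ X, k < #(nbrsIn G U v) := fun v hv =>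
    lt_of_not_ge fun h_le => h_not (h.linked_of_card_nbrsIn_le ih hv h_le)
  have h_common : ∀ u ∈ U \ X, ∀ v ∈ U \ X, G.Adj u v → k ≤ #(nbrsIn G U u ∩ nbrsIn G U v) :=
    fun u hu v hv huv => le_of_not_gt fun h_lt =>
      h_not (h.linked_of_card_inter_lt ih hu hv huv h_lt)
  have h_edge : ∃ u ∈ U \ X, ∃ v ∈ U \ X, G.Adj u v := by
    obtain ⟨u, hu⟩ := h.isDenseOver.nonempty
    have h_card : #X < #(nbrsIn G U u) := by
      have := h.card_le
      have := hdeg u hu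
      omega
    obtain ⟨v, hv, hvX⟩ := exists_mem_notMem_of_card_lt_card h_card
    exact ⟨u, hu, v, mem_sdiff.2 ⟨nbrsIn_subset hv, hvX⟩, (mem_nbrsIn.1 hv).2⟩
  have h_edges : outerCount G X (U \ X) ≤ 2 * k * #(U \ X) + 2 := by
    obtain ⟨u, hu, v, hv, huv⟩ := h_edge
    exact le_of_not_gt fun h_lt => h_not (h.linked_of_adj_of_lt ih ih_del hu hv huv h_lt)
  obtain ⟨D, hDU, hD_card, hD⟩ := h.exists_isRobust_of_forall_le hk hdeg h_common h_edges
  have hX := h.card_le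
  exact h_not (h.linked_of_isRobust ih hD hDU (by omega) (by omega))

theorem IsMassed.linked (h : IsMassed k m G U X) (hk : 18 * m ≤ k) : Linked L G U X := by
  induction hN : #U using Nat.strong_induction_on generalizing G U X with
  | _ N ih_card =>
  subst hN
  induction hM : dartCount G U using Nat.strong_induction_on generalizing G with
  | _ M ih_edges =>
  subst hM
  exact h.linked_of_forall_dartCount_lt hk (fun G' U' X' h_lt h' => ih_card _ h_lt h' rfl)
    fun G' h_lt h' => ih_edges _ h_lt h' rfl

end Massed

/-! ### Mader's theorem -/

section Mader

variable {U U₀ X A B : Finset V} {k m d : ℕ} {v : V}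

/-- The edge condition in the proof of Mader's theorem: `G[U]` has at least `d` vertices and more
than `d * (#U - m)` edges. Minimal sets with this property induce highly connected subgraphs. -/
def IsMaderDense (d m : ℕ) (G : SimpleGraph V) (U : Finset V) : Prop :=
  d ≤ #U ∧ 2 * d * #U < dartCount G U + 2 * d * m

theorem isMaderDense_of_le_dartCount (hm : 0 < m) (hd : 0 < d) (hU : U.Nonempty)
    (h : 2 * d * #U ≤ dartCount G U) : IsMaderDense d m G U := by
  have hU_card : 2 * d ≤ #U :=
    Nat.le_of_mul_le_mul_right (h.trans dartCount_le_card_mul_card) hU.card_pos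
  have h_pos : 0 < 2 * d * m := by positivity
  exact ⟨by omega, by omega⟩

theorem IsMaderDense.lt_card (h : IsMaderDense d m G U) (hm : 2 * m ≤ d) : d < #U := by
  refine lt_of_le_of_ne h.1 fun h_eq => ?_
  have h_count := h.2.trans_le (Nat.add_le_add_right dartCount_le_card_mul_card _)
  rw [← h_eq] at h_count
  nlinarith

variable [DecidableEq V]

omit [DecidableEq V] in
theorem lt_card_nbrsIn_of_minimal_isMaderDense (h : Minimal (IsMaderDense d m G) U)
    (hm : 2 * m ≤ d) (hv : v ∈ U) : d < #(nbrsIn G U v) := by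
  classical
  by_contra! h_le
  have h_insert := dartCount_insert (G := G) (notMem_erase v U)
  rw [insert_erase hv, nbrsIn_erase_self] at h_insert
  have h_card := card_erase_add_one hv
  have h_count := h.prop.2
  have hU := h.prop.lt_card hm
  refine h.not_prop_of_lt (erase_ssubset hv) ⟨by omega, ?_⟩
  rw [← h_card, mul_add] at h_count
  omega

theorem subset_or_subset_of_minimal_isMaderDense (h : Minimal (IsMaderDense d m G) U)
    (hm : 2 * m ≤ d) (hAB : IsSeparation G U A B) (hc : #(A ∩ B) < m) : A ⊆ B ∨ B ⊆ A := by
  by_contra! h_not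
  obtain ⟨⟨a, haA, haB⟩, b, hbB, hbA⟩ := And.imp not_subset.1 not_subset.1 h_not
  have h_sparse : ∀ C ⊆ U, ∀ v ∈ U, nbrsIn G U v ⊆ C → ∀ w ∈ U, w ∉ C →
      dartCount G C + 2 * d * m ≤ 2 * d * #C := fun C hC v hv hvC w hw hwC => by
    by_contra! h_dense
    have hC_card : d ≤ #C :=
      (lt_card_nbrsIn_of_minimal_isMaderDense h hm hv).le.trans (card_le_card hvC)
    exact h.not_prop_of_lt ⟨hC, fun hUC => hwC (hUC hw)⟩ ⟨hC_card, h_dense⟩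
  have haU := hAB.left_subset haA
  have hbU := hAB.right_subset hbB
  have hA := h_sparse A hAB.left_subset a haU (hAB.nbrsIn_subset_left haA haB) b hbU hbA
  have hB := h_sparse B hAB.right_subset b hbU (hAB.symm.nbrsIn_subset_left hbB hbA) a haU haB
  have h_darts := hAB.dartCount_add
  have h_card := congrArg (2 * d * ·) hAB.card_add_card
  have h_count := h.prop.2
  have h_order : 2 * d * #(A ∩ B) ≤ 2 * d * m := Nat.mul_le_mul_left _ hc.le
  simp only [mul_add] at h_card
  omega

theorem isMassed_of_minimal_isMaderDense (h : Minimal (IsMaderDense d m G) U)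
    (hk : k + 2 * m ≤ d) (hX : X ⊆ U) (hXm : #X ≤ m) : IsMassed k m G U X where
  subset := hX
  card_le := hXm
  isDenseOver := by
    have hU := h.prop.lt_card (by omega)
    have h_count := h.prop.2
    have hX_count : dartCount G X ≤ m * m :=
      dartCount_le_card_mul_card.trans (Nat.mul_le_mul hXm hXm)
    have h_card : #(U \ X) ≤ #U := card_le_card sdiff_subset
    have h_sdiff : 2 * k * #(U \ X) ≤ 2 * k * #U := Nat.mul_le_mul_left _ h_card
    rw [dartCount_eq_add_outerCount G hX] at h_count
    unfold IsDenseOver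
    nlinarith
  noDenseCut A B hAB hXA h_lt h_dense := by
    rcases subset_or_subset_of_minimal_isMaderDense h (by omega) hAB (h_lt.trans_le hXm)
      with h_sub | h_sub
    · exact h_lt.not_ge (card_le_card (subset_inter hXA (hXA.trans h_sub)))
    · exact h_dense.nonempty.ne_empty (sdiff_eq_empty_iff_subset.2 h_sub)

omit [DecidableEq V] in
theorem exists_linked (L : Type*) (hm : 0 < m) (hU₀ : U₀.Nonempty)
    (h : 40 * m * #U₀ ≤ dartCount G U₀) :
    ∃ U : Finset V, 20 * m < #U ∧ (∀ v ∈ U, 20 * m < #(nbrsIn G U v)) ∧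
      ∀ X ⊆ U, #X ≤ m → Linked L G U X := by
  classical
  have h_dense : IsMaderDense (20 * m) m G U₀ :=
    isMaderDense_of_le_dartCount hm (by omega) hU₀ (by linarith)
  obtain ⟨U, -, hU⟩ := exists_minimal_le_of_wellFoundedLT _ U₀ h_dense
  exact ⟨U, hU.prop.lt_card (by omega),
    fun v hv => lt_card_nbrsIn_of_minimal_isMaderDense hU (by omega) hv, fun X hX hXm =>
      (isMassed_of_minimal_isMaderDense (k := 18 * m) hU (by omega) hX hXm).linked le_rfl⟩

end Mader

/-! ### Subdivisions -/

section Subdivision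

open SimpleGraph

variable {H : SimpleGraph W} {U : Finset V}

theorem exists_walk_of_reachable_monoGraph {f : V → L} {x y : V}
    (h : (monoGraph G U f).Reachable x y) : ∃ p : G.Walk x y, ∀ z ∈ p.support, f z = f x := by
  classical
  obtain ⟨p⟩ := h
  have hle : monoGraph G U f ≤ G := fun _ _ hvw => hvw.1
  refine ⟨p.mapLe hle, fun z hz => ?_⟩
  rw [Walk.support_mapLe_eq_support] at hz
  exact (label_eq_of_reachable ⟨p.takeUntil z hz⟩).symm

theorem exists_symmetric_isPath {b : W → V} {Q : Sym2 W → V → Prop}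
    (h : ∀ i j, H.Adj i j → ∃ p : G.Walk (b i) (b j), ∀ z ∈ p.support, Q s(i, j) z) :
    ∃ P : ∀ ⦃i j : W⦄, H.Adj i j → G.Walk (b i) (b j), ∀ i j (hij : H.Adj i j),
      (P hij).IsPath ∧ P hij.symm = (P hij).reverse ∧ ∀ z ∈ (P hij).support, Q s(i, j) z := by
  classical
  let _ : LinearOrder W := IsWellOrder.linearOrder WellOrderingRel
  choose p hp using h
  refine ⟨fun i j hij =>
    if i < j then (p i j hij).bypass else (p j i hij.symm).bypass.reverse, fun i j hij => ?_⟩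
  rcases hij.ne.lt_or_gt with hlt | hgt
  · simp only [if_pos hlt, if_neg hlt.not_gt]
    exact ⟨(p i j hij).bypass_isPath, trivial, fun z hz =>
      hp i j hij z ((p i j hij).support_bypass_subset_support hz)⟩
  · simp only [if_pos hgt, if_neg hgt.not_gt, Walk.reverse_reverse]
    refine ⟨(p j i hij.symm).bypass_isPath.reverse, trivial, fun z hz => ?_⟩
    rw [Walk.support_reverse, List.mem_reverse] at hz
    exact Sym2.eq_swap ▸ hp j i hij.symm z ((p j i hij.symm).support_bypass_subset_support hz)

theorem hasSubdiv_of_labelled_walks {b : W → V} {f : V → W ⊕ Sym2 W}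
    (hb : Function.Injective b) (hf : ∀ w, f (b w) = .inl w)
    (hp : ∀ i j, H.Adj i j → ∃ p : G.Walk (b i) (b j), ∀ z ∈ p.support,
      z = b i ∨ z = b j ∨ f z = .inr s(i, j)) : HasSubdiv G H := by
  obtain ⟨P, hP⟩ := exists_symmetric_isPath
    (Q := fun e z => (∃ w ∈ e, z = b w) ∨ f z = .inr e) fun i j hij =>
      (hp i j hij).imp fun p hp z hz => by
        simpa only [Sym2.mem_iff, exists_eq_or_imp, exists_eq_left, or_assoc] using hp z hz
  have h_support : ∀ i j (hij : H.Adj i j), ∀ z ∈ (P hij).support,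
      (z = b i ∨ z = b j) ∨ f z = .inr s(i, j) := fun i j hij z hz => by
    simpa only [Sym2.mem_iff, exists_eq_or_imp, exists_eq_left] using (hP i j hij).2.2 z hz
  refine ⟨b, P, hb, fun i j h => (hP i j h).1, fun i j h => (hP i j h).2.1,
    fun i j h k hk => ?_, fun i j hij k l hkl hne v hv hv' => ?_⟩
  · have h_branch := h_support i j h _ hk
    simpa only [hf, hb.eq_iff, reduceCtorEq, or_false] using h_branch
  · have h_left := h_support i j hij v hv
    have h_right := h_support k l hkl v hv'
    grind

theorem exists_injective_branch_and_neighbours [Fintype W] [Fintype H.Dart]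
    (hU : Fintype.card W ≤ #U)
    (hdeg : ∀ v ∈ U, Fintype.card W + Fintype.card H.Dart ≤ #(nbrsIn G U v)) :
    ∃ (b : W → V) (c : H.Dart → V), Function.Injective (Sum.elim b c) ∧ (∀ w, b w ∈ U) ∧
      ∀ d, c d ∈ nbrsIn G U (b d.fst) := by
  classical
  obtain ⟨b⟩ : Nonempty (W ↪ U) := Function.Embedding.nonempty_of_card_le (by simpa using hU)
  let B : Finset V := univ.image fun w => (b w : V)
  let N : H.Dart → Finset V := fun d => nbrsIn G U (b d.fst) \ B
  have hB_card : #B ≤ Fintype.card W := card_image_le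
  have hN_card : ∀ d, Fintype.card H.Dart ≤ #(N d) := fun d => by
    have h_sdiff : #(nbrsIn G U (b d.fst)) - #B ≤ #(N d) := le_card_sdiff _ _
    have := hdeg _ (b d.fst).2
    omega
  have h_hall : ∀ s : Finset H.Dart, #s ≤ #(s.biUnion N) := fun s => by
    rcases s.eq_empty_or_nonempty with rfl | ⟨d, hd⟩
    · simp
    · exact (card_le_univ s).trans
        ((hN_card d).trans (card_le_card (subset_biUnion_of_mem N hd)))
  obtain ⟨c, hc, hcN⟩ := (all_card_le_biUnion_card_iff_exists_injective N).1 h_hall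
  have hbc : ∀ w d, (b w : V) ≠ c d := fun w d h =>
    (mem_sdiff.1 (hcN d)).2 (h ▸ mem_image_of_mem _ (mem_univ w))
  exact ⟨fun w => b w, c, (Subtype.val_injective.comp b.injective).sumElim hc hbc,
    fun w => (b w).2, fun d => (mem_sdiff.1 (hcN d)).1⟩

theorem hasSubdiv_of_linked [Fintype W] [Nonempty W] [Fintype H.Dart]
    (hU : Fintype.card W ≤ #U)
    (hdeg : ∀ v ∈ U, Fintype.card W + Fintype.card H.Dart ≤ #(nbrsIn G U v))
    (h : ∀ X ⊆ U, #X ≤ Fintype.card W + Fintype.card H.Dart → Linked (W ⊕ Sym2 W) G U X) :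
    HasSubdiv G H := by
  classical
  obtain ⟨b, c, hbc, hb, hc⟩ := exists_injective_branch_and_neighbours hU hdeg
  let g : W ⊕ H.Dart → V := Sum.elim b c
  let l : V → W ⊕ Sym2 W :=
    Function.extend g (Sum.map id Dart.edge) fun _ => .inl (Classical.arbitrary W)
  have hl_branch : ∀ w, l (b w) = .inl w := fun w => hbc.extend_apply _ _ (.inl w)
  have hl_nbr : ∀ d, l (c d) = .inr d.edge := fun d => hbc.extend_apply _ _ (.inr d)
  have hgX : ∀ a, g a ∈ univ.image g := fun a => mem_image_of_mem g (mem_univ a)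
  have hgU : univ.image g ⊆ U := image_subset_iff.2 fun a _ =>
    Sum.rec hb (fun d => nbrsIn_subset (hc d)) a
  obtain ⟨f, hf, h_reach⟩ := h (univ.image g) hgU
    (card_image_le.trans_eq (by rw [card_univ, Fintype.card_sum])) l
  refine hasSubdiv_of_labelled_walks (b := b) (f := f) (hbc.comp Sum.inl_injective)
    (fun w => (hf _ (hgX (.inl w))).trans (hl_branch w)) fun i j hij => ?_
  let d : H.Dart := ⟨(i, j), hij⟩
  have h_label : l (c d) = l (c d.symm) := by rw [hl_nbr, hl_nbr, Dart.edge_symm]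
  obtain ⟨p, hp⟩ : ∃ p : G.Walk (c d) (c d.symm), ∀ z ∈ p.support, f z = f (c d) :=
    exists_walk_of_reachable_monoGraph (h_reach _ (hgX (.inr d)) _ (hgX (.inr d.symm)) h_label)
  have h_start : G.Adj (b i) (c d) := (mem_nbrsIn.1 (hc d)).2
  have h_end : G.Adj (c d.symm) (b j) := (mem_nbrsIn.1 (hc d.symm)).2.symm
  refine ⟨Walk.cons h_start (p.concat h_end), fun z hz => ?_⟩
  rw [Walk.support_cons, List.mem_cons, Walk.support_concat, List.mem_append,
    List.mem_singleton] at hz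
  rcases hz with hz | hz | hz
  · exact .inl hz
  · exact .inr (.inr ((hp z hz).trans ((hf _ (hgX (.inr d))).trans (hl_nbr d))))
  · exact .inr (.inl hz)

theorem hasSubdiv_of_le_dartCount [Fintype W] [Nonempty W] [Fintype H.Dart] {U₀ : Finset V}
    (hU₀ : U₀.Nonempty)
    (h : 40 * (Fintype.card W + Fintype.card H.Dart) * #U₀ ≤ dartCount G U₀) :
    HasSubdiv G H := by
  have hW : 0 < Fintype.card W := Fintype.card_pos
  obtain ⟨U, hU, hdeg, h_linked⟩ := exists_linked (W ⊕ Sym2 W) (by omega) hU₀ h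
  exact hasSubdiv_of_linked (by omega) (fun v hv => by have := hdeg v hv; omega) h_linked

theorem avgDeg_eq_dartCount_div [Fintype V] (G : SimpleGraph V) :
    avgDeg G = (dartCount G univ : ℝ) / (Fintype.card V : ℝ) := by
  have h_deg : ∀ v, (G.neighborSet v).ncard = #(nbrsIn G univ v) := fun v => by
    rw [← Set.ncard_coe_finset]
    congr 1
    ext w
    simp
  simp only [avgDeg, h_deg, finsum_eq_sum_of_fintype, Nat.card_eq_fintype_card, dartCount,
    Nat.cast_sum]

theorem card_dart_eq_two_mul_ncard_edgeSet [Fintype W] (H : SimpleGraph W) [DecidableRel H.Adj] :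
    Fintype.card H.Dart = 2 * H.edgeSet.ncard := by
  classical
  rw [H.dart_card_eq_twice_card_edges, ← coe_edgeFinset, Set.ncard_coe_finset]

end Subdivision

end GraphLinkage

theorem statement_17_general {V W : Type*} [Finite V] [Finite W]
    (H : SimpleGraph W) (G : SimpleGraph V) (p q : Nat)
    (hp : Nat.card W = p) (hq : H.edgeSet.ncard = q)
    (hdeg : (40 * ((p : Real) + 2 * (q : Real))) ≤ avgDeg G) :
    HasSubdiv G H := by
  classical
  have := Fintype.ofFinite V
  have := Fintype.ofFinite W
  rcases isEmpty_or_nonempty W with hW | hW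
  · exact ⟨isEmptyElim, fun i => isEmptyElim i, fun i => isEmptyElim i, fun i => isEmptyElim i,
      fun i => isEmptyElim i, fun i => isEmptyElim i, fun i => isEmptyElim i⟩
  rw [Nat.card_eq_fintype_card] at hp
  have h_dart := GraphLinkage.card_dart_eq_two_mul_ncard_edgeSet H
  have hp_pos : 0 < p := hp ▸ Fintype.card_pos
  rw [GraphLinkage.avgDeg_eq_dartCount_div] at hdeg
  have hV : 0 < Fintype.card V := Nat.pos_of_ne_zero fun hV => by
    rw [hV, Nat.cast_zero, div_zero] at hdeg
    exact hdeg.not_gt (by positivity)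
  have h_count : 40 * (p + 2 * q) * Fintype.card V ≤ GraphLinkage.dartCount G Finset.univ := by
    rw [le_div_iff₀ (by exact_mod_cast hV)] at hdeg
    exact_mod_cast hdeg
  refine GraphLinkage.hasSubdiv_of_le_dartCount (Finset.card_pos.1 hV) ?_
  rwa [h_dart, hp, hq]

theorem statement_17 {V W : Type*} [Fintype V] [Fintype W]
    (H : SimpleGraph W) (G : SimpleGraph V) (p q : Nat)
    (hp : Nat.card W = p) (hq : H.edgeSet.ncard = q)
    (hdeg : (88 * ((p : Real) + (q : Real))) ≤ avgDeg G) :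
    HasSubdiv G H :=
  statement_17_general H G p q hp hq <| le_trans
    (by linarith [p.cast_nonneg (α := ℝ), q.cast_nonneg (α := ℝ)]) hdeg
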